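/- arXiv:2601.08678 — 2 statements merged into one kernel-verified Lean document; each statement's English description precedes it below -/
import Mathlib

section
/- Let D = (P,𝓑) be a symmetric 2-(v,k,λ) design with λ > 1, let G be a flag-transitive automorphism group of D, let K be a finite abelian group, and fix a point x ∈ P and a block B ∈ 𝓑. Then the following are equivalent: (a) G_x ≅ K; (b) G_B ≅ K; (c) the permutation group induced by G_x on the set D(x) of blocks through x is isomorphic to K; (d) G_B^B ≅ K; (e) there exist a point y and an orbit Δ of G_y on P on which G_y acts faithfully such that 𝓑 = {Δ^g : g ∈ G} and G_y ≅ K. Moreover, if these conditions hold, then G_x and G_B are conjugate in G, and either (1) G acts imprimitively on both P and 𝓑, or (2) K is cyclic, G has odd order, G is a Frobenius group on P (transitive, non-regular, and every non-identity element fixes at most one point), v = p^d for an odd prime p, and there is a bijection from P to the Galois field GF(p^d) under which every element of G acts as a semilinear affine map t ↦ a·σ(t) + b with a ≠ 0, b ∈ GF(p^d) and σ a field automorphism of GF(p^d) (that is, G ≤ AΓL_1(v)). -/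
/-!
The argument treats points and blocks alike, through the self-dual notion `FlagAction` of a
flag-transitive action on a symmetric design. The non-formal part of its self-duality is that an
automorphism fixes as many points as blocks: the incidence matrix is invertible and intertwines the
two permutation representations (`IsDesign.fix_eq`).

Equivalences. Suppose that `G_x`, or merely the group it induces on the blocks through `x`, is
abelian. Being transitive and abelian, the induced group is regular, so an element fixing a flag
`(x, B)` fixes all blocks through each of its fixed points; as it has equally many fixed points and
fixed blocks, a count of flags shows that it is the identity (`FlagAction.free_of_comm`). Hence
`G_x` is faithful on the blocks through `x` and has order `k`. A Sylow argument then gives a block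
`C` with `G_C = G_x`, and `C` is an orbit of `G_x` (`FlagAction.exists_stabilizer_eq`). So point and
block stabilizers are conjugate, `C` is the orbit required in (e), and every other implication
follows by duality. As point stabilizers are block stabilizers, `G` is also primitive on points if
it is primitive on blocks.

Primitive case. An element fixing two points is trivial by maximality of the stabilizers
(`eq_one_of_fix_two`), so `G` is a Frobenius group. The transfer into `G_x` yields a normal
complement `M` (`exists_frobenius_kernel`); it is a minimal normal subgroup, and abelian because a
fixed-point-free automorphism fixes a unique Sylow `p`-subgroup (`kernel_comm`). Thus `M` is a
simple module over the commutative ring `ℤ[K]`, that is, a residue field `F` of `ℤ[K]`; so `K`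
embeds into `Fˣ`, which makes it cyclic, and `G` acts by maps `t ↦ a t + b`
(`exists_field_of_frobenius`).

Parity. An involution of `G_x` would fix exactly one block, which gives contradictory values for the
parity of `lam` (`FlagAction.odd_valency`), so `k` is odd. If `v` were even, `F` would have
characteristic two, `lam` would be even, and a block would be a difference set of odd order in an
elementary abelian `2`-group; none exists (`no_difference_set`). So `|G| = k v` is odd.
-/

open scoped Pointwise

/-- A group action is primitive if it is transitive and every block is trivial
(this is the usual notion of a primitive permutation group). -/
def IsPrimitiveAction (G X : Type*) [Group G] [MulAction G X] : Prop :=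
  MulAction.IsPretransitive G X ∧
    ∀ B : Set X, MulAction.IsBlock G B → B.Subsingleton ∨ B = Set.univ

variable {P : Type*} [Fintype P] [DecidableEq P]

/-- `𝓑` is the block set of a (non-trivial) 2-design with parameters `(v, k, lam)`
on the point set `P`. -/
structure IsDesign (𝓑 : Finset (Finset P)) (v k lam : ℕ) : Prop where
  card_points : Fintype.card P = v
  blocks_card : ∀ B ∈ 𝓑, B.card = k
  two_lt_k : 2 < k
  k_lt_v : k < v - 1
  lam_pos : 0 < lam
  pair_blocks : ∀ x y : P, x ≠ y → (𝓑.filter fun B => x ∈ B ∧ y ∈ B).card = lam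

/-- `G` is an automorphism group of the design with block set `𝓑`:
every element of `G` maps blocks to blocks. -/
def IsAutGroup (G : Subgroup (Equiv.Perm P)) (𝓑 : Finset (Finset P)) : Prop :=
  ∀ g ∈ G, ∀ B ∈ 𝓑, g • B ∈ 𝓑

/-- `G` acts transitively on the flags of the design with block set `𝓑`. -/
def IsFlagTransitive (G : Subgroup (Equiv.Perm P)) (𝓑 : Finset (Finset P)) : Prop :=
  ∀ B₁ ∈ 𝓑, ∀ B₂ ∈ 𝓑, ∀ x₁ ∈ B₁, ∀ x₂ ∈ B₂, ∃ g ∈ G, g • x₁ = x₂ ∧ g • B₁ = B₂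

/-- `G` acts transitively on the blocks of the design with block set `𝓑`. -/
def IsBlockTransitive (G : Subgroup (Equiv.Perm P)) (𝓑 : Finset (Finset P)) : Prop :=
  ∀ B₁ ∈ 𝓑, ∀ B₂ ∈ 𝓑, ∃ g ∈ G, g • B₁ = B₂

/-- `G ≤ AΓL₁(v)`: the points can be identified with a finite field `F` in such a way
that every element of `G` acts as a semilinear affine map `t ↦ a • σ(t) + b`. -/
def ActsSemilinearlyOn {P : Type*} (G : Subgroup (Equiv.Perm P)) (F : Type) [Field F] : Prop :=
  ∃ e : P ≃ F, ∀ g : G, ∃ (a b : F) (σ : F ≃+* F), a ≠ 0 ∧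
    ∀ x : P, e (g • x) = a * σ (e x) + b

/-! ### Symmetric designs as abstract incidence structures -/

/-- A flag-transitive action of a group `G` on a symmetric `2-(v,k,lam)` design, with points `X`,
blocks `Y` and incidence relation `I`. Both halves of the design conditions are recorded, as is the
fact that each element of `G` fixes as many points as blocks, so that the notion is self-dual. -/
structure FlagAction (G X Y : Type*) [Group G] [MulAction G X] [MulAction G Y]
    (I : X → Y → Prop) (k lam : ℕ) : Prop where
  inv : ∀ (g : G) x y, I x y → I (g • x) (g • y)
  flag : ∀ x y x' y', I x y → I x' y' → ∃ g : G, g • x = x' ∧ g • y = y'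
  deg_left : ∀ x, {y | I x y}.ncard = k
  deg_right : ∀ y, {x | I x y}.ncard = k
  pair_left : ∀ x x', x ≠ x' → {y | I x y ∧ I x' y}.ncard = lam
  pair_right : ∀ y y', y ≠ y' → {x | I x y ∧ I x y'}.ncard = lam
  card_eq : Nat.card X = Nat.card Y
  count : k * (k - 1) = lam * (Nat.card X - 1)
  fix : ∀ g : G, (MulAction.fixedBy X g).ncard = (MulAction.fixedBy Y g).ncard
  faith_left : ∀ g : G, (∀ x : X, g • x = x) → g = 1
  faith_right : ∀ g : G, (∀ y : Y, g • y = y) → g = 1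
  two_lt : 2 < k
  k_lt : k < Nat.card X - 1
  lam_pos : 0 < lam

/-- If a finite group acts freely on an invariant set, its order divides the size of that set. -/
theorem card_dvd_ncard_of_free {H X : Type*} [Group H] [Finite H] [MulAction H X] [Finite X]
    (s : Set X) (hs : ∀ h : H, ∀ x ∈ s, h • x ∈ s)
    (free : ∀ h : H, ∀ x ∈ s, h • x = x → h = 1) : Nat.card H ∣ s.ncard := by
  classical
  let S : SubMulAction H X := ⟨s, fun h x hx => hs h x hx⟩
  have e := MulAction.selfEquivSigmaOrbitsQuotientStabilizer H S
  have key : ∀ x : S, MulAction.stabilizer H x = ⊥ := by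
    intro x
    rw [eq_bot_iff]
    intro h hh
    rw [MulAction.mem_stabilizer_iff] at hh
    exact free h x x.2 (congrArg Subtype.val hh)
  have : s.ncard = Nat.card S := rfl
  have : Fintype (Quotient (MulAction.orbitRel H S)) :=
    @Fintype.ofFinite _ (Quotient.finite _)
  rw [‹s.ncard = _›, Nat.card_congr e, Nat.card_sigma]
  apply Finset.dvd_sum
  intro i _
  rw [key]
  exact dvd_of_eq (Nat.card_congr QuotientGroup.quotientBot.toEquiv.symm)

namespace FlagAction

variable {G X Y : Type*} [Group G] [MulAction G X] [MulAction G Y]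
    {I : X → Y → Prop} {k lam : ℕ}

theorem dual (h : FlagAction G X Y I k lam) :
    FlagAction G Y X (fun y x => I x y) k lam where
  inv g y x := h.inv g x y
  flag y x y' x' h1 h2 := (h.flag x y x' y' h1 h2).imp fun _ => And.symm
  deg_left := h.deg_right
  deg_right := h.deg_left
  pair_left := h.pair_right
  pair_right := h.pair_left
  card_eq := h.card_eq.symm
  count := h.card_eq ▸ h.count
  fix g := (h.fix g).symm
  faith_left := h.faith_right
  faith_right := h.faith_left
  two_lt := h.two_lt
  k_lt := h.card_eq ▸ h.k_lt
  lam_pos := h.lam_pos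

theorem inv_iff (h : FlagAction G X Y I k lam) (g : G) (x : X) (y : Y) :
    I (g • x) (g • y) ↔ I x y :=
  ⟨fun H => by simpa using h.inv g⁻¹ _ _ H, h.inv g x y⟩

theorem exists_right (h : FlagAction G X Y I k lam) (x : X) : ∃ y, I x y := by
  have := h.deg_left x
  have h2 := h.two_lt
  exact Set.nonempty_of_ncard_ne_zero (s := {y | I x y}) (by omega)

theorem exists_join (h : FlagAction G X Y I k lam) (x x' : X) : ∃ y, I x y ∧ I x' y := by
  by_cases e : x = x'
  · subst e
    simpa using h.exists_right x
  · have := h.pair_left x x' e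
    have h2 := h.lam_pos
    exact Set.nonempty_of_ncard_ne_zero (s := {y | I x y ∧ I x' y}) (by omega)

theorem transitive (h : FlagAction G X Y I k lam) (x x' : X) : ∃ g : G, g • x = x' := by
  obtain ⟨y, hy⟩ := h.exists_right x
  obtain ⟨y', hy'⟩ := h.exists_right x'
  exact (h.flag x y x' y' hy hy').imp fun _ => And.left

theorem isPretransitive (h : FlagAction G X Y I k lam) : MulAction.IsPretransitive G X :=
  ⟨h.transitive⟩

theorem lam_lt (h : FlagAction G X Y I k lam) : lam < k := by
  by_contra hc
  have h1 := h.count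
  have h2 := h.k_lt
  have h3 := h.two_lt
  have : k * (k - 1) < lam * (Nat.card X - 1) := by
    calc k * (k-1) < k * (Nat.card X - 1) := by
          apply Nat.mul_lt_mul_of_pos_left <;> omega
      _ ≤ _ := Nat.mul_le_mul_right _ (by omega)
  omega

/-- If the commutators of a point stabilizer act trivially on the blocks through the point, then
no non-identity element fixes a flag. Indeed, an element `g` fixing a flag `(x, y)` fixes all
blocks through `x`, hence all blocks through each of its fixed points. As it has as many fixed
points as fixed blocks, counting flags shows that all points of a fixed block meeting the fixed
points are fixed; and every point lies on such a block. -/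
theorem free_of_comm [Finite X] [Finite Y] (h : FlagAction G X Y I k lam)
    (hc : ∀ x : X, ∀ a b : G, a • x = x → b • x = x → ∀ y, I x y → (a * b) • y = (b * a) • y)
    {g : G} {x : X} {y : Y} (hI : I x y) (hx : g • x = x) (hy : g • y = y) : g = 1 := by
  classical
  have step : ∀ x y, I x y → g • x = x → g • y = y → ∀ y', I x y' → g • y' = y' := by
    intro x y hI hx hy y' hI'
    obtain ⟨t, ht, rfl⟩ := h.flag x y x y' hI hI'
    rw [← mul_smul, hc x g t hx ht y hI, mul_smul, hy]
  have hall : ∀ x', g • x' = x' → ∀ y', I x' y' → g • y' = y' := by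
    intro x' hx'
    obtain ⟨y₁, h1, h2⟩ := h.exists_join x x'
    exact step x' y₁ h2 hx' (step x y hI hx hy y₁ h1)
  have : Fintype X := Fintype.ofFinite _
  have : Fintype Y := Fintype.ofFinite _
  -- `F` and `Φ` are the fixed points and blocks, and `hdc` counts the flags between them
  set F : Finset X := Finset.univ.filter fun x => g • x = x with hF
  set Φ : Finset Y := Finset.univ.filter fun y => g • y = y with hΦ
  have hcard : F.card = Φ.card := by
    have := h.fix g
    rw [← Set.ncard_coe_finset, ← Set.ncard_coe_finset]
    convert this using 2 <;> ext <;> simp [F, Φ]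
  have hdl : ∀ x, (Finset.univ.filter fun y => I x y).card = k := by
    intro x
    rw [← h.deg_left x, ← Set.ncard_coe_finset]; simp
  have hdr : ∀ y, (Finset.univ.filter fun x => I x y).card = k := by
    intro y
    rw [← h.deg_right y, ← Set.ncard_coe_finset]; simp
  have hdc := Finset.sum_card_bipartiteAbove_eq_sum_card_bipartiteBelow (s := F) (t := Φ) I
  have h1 : ∀ x ∈ F, (Finset.bipartiteAbove I Φ x).card = k := by
    intro x hx
    rw [← hdl x]
    congr 1
    ext y
    simp only [Finset.mem_bipartiteAbove, hΦ, Finset.mem_filter, Finset.mem_univ, true_and]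
    exact ⟨And.right, fun hy => ⟨hall x (by simpa [hF] using hx) y hy, hy⟩⟩
  rw [Finset.sum_congr rfl h1, Finset.sum_const, hcard, ← Finset.sum_const] at hdc
  have hle : ∀ y ∈ Φ, (Finset.bipartiteBelow I F y).card ≤ k := by
    intro y _
    rw [← hdr y]
    exact Finset.card_le_card (Finset.filter_subset_filter _ (Finset.subset_univ _))
  have heq := (Finset.sum_eq_sum_iff_of_le hle).1 hdc.symm
  apply h.faith_left
  intro x'
  obtain ⟨y₁, h1, h2⟩ := h.exists_join x x'
  have hy₁ : y₁ ∈ Φ := by simpa [hΦ] using hall x hx y₁ h1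
  have hsub : Finset.bipartiteBelow I F y₁ ⊆ Finset.univ.filter fun x => I x y₁ :=
    Finset.filter_subset_filter _ (Finset.subset_univ _)
  have := Finset.eq_of_subset_of_card_le hsub (by rw [hdr, heq y₁ hy₁])
  have hx' : x' ∈ Finset.bipartiteBelow I F y₁ := by rw [this]; simpa using h2
  simpa [hF] using (Finset.mem_bipartiteBelow I).1 hx' |>.1

/-- If no non-identity element fixes a flag, point stabilizers have order `k`. -/
theorem card_stabilizer [Finite G] [Finite Y] (h : FlagAction G X Y I k lam)
    (hfree : ∀ (g : G) x y, I x y → g • x = x → g • y = y → g = 1) (x : X) :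
    Nat.card (MulAction.stabilizer G x) = k := by
  obtain ⟨y, hy⟩ := h.exists_right x
  rw [← h.deg_left x]
  apply Nat.card_congr
  refine Equiv.ofBijective (fun g => ⟨(g : G) • y, ?_⟩) ⟨?_, ?_⟩
  · have := h.inv g x y hy
    rwa [g.2] at this
  · intro a b hab
    have hab' : (a : G) • y = (b : G) • y := congrArg Subtype.val hab
    have := hfree ((b : G)⁻¹ * a) x y hy
      (by rw [mul_smul, a.2, inv_smul_eq_iff, b.2]) (by rw [mul_smul, hab', inv_smul_smul])
    exact Subtype.ext (inv_mul_eq_one.1 this).symm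
  · rintro ⟨y', hy'⟩
    obtain ⟨g, hg, hgy⟩ := h.flag x y x y' hy hy'
    exact ⟨⟨g, hg⟩, Subtype.ext hgy⟩

/-- The fixed block of a point stabilizer. A prime `r` whose exact power `r ^ a` in `k` does not
divide `lam` exists because `lam < k`. A Sylow `r`-subgroup `R` of the abelian group `G_x` cannot
fix two blocks, as it would act freely on their `lam` common points; it fixes at least one since
`v ≡ 1 mod r`. The whole of `G_x` centralizes `R` and so fixes that block. -/
theorem exists_stabilizer_eq [Finite G] [Finite X] [Finite Y] (h : FlagAction G X Y I k lam)
    (hfree : ∀ (g : G) x y, I x y → g • x = x → g • y = y → g = 1) (x : X)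
    (hcomm : ∀ a b : G, a • x = x → b • x = x → a * b = b * a) :
    ∃ y : Y, MulAction.stabilizer G y = MulAction.stabilizer G x ∧ ¬ I x y ∧
      ∀ x', I x' y → {z | I z y} = MulAction.orbit (MulAction.stabilizer G x) x' := by
  classical
  have hk := h.card_stabilizer hfree x
  have hk2 := h.two_lt
  have hlk := h.lam_lt
  have hl0 := h.lam_pos
  obtain ⟨r, hr, hrl⟩ : ∃ r, r.Prime ∧ ¬ r ^ k.factorization r ∣ lam := by
    by_contra hcon
    push Not at hcon
    have : k ∣ lam := by
      rw [← Nat.factorization_le_iff_dvd (by omega) (by omega)]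
      intro p
      by_cases hp : p.Prime
      · exact (hp.pow_dvd_iff_le_factorization (by omega)).1 (hcon p hp)
      · simp [Nat.factorization_eq_zero_of_not_prime _ hp]
    exact absurd (Nat.le_of_dvd hl0 this) (by omega)
  have : Fact r.Prime := ⟨hr⟩
  obtain ⟨R⟩ : Nonempty (Sylow r (MulAction.stabilizer G x)) := inferInstance
  have hRc : Nat.card R = r ^ k.factorization r := by
    rw [R.card_eq_multiplicity, hk]
  have hfixR : ∀ c : R, ((c : MulAction.stabilizer G x) : G) • x = x := fun c => c.1.2
  -- `R` fixes at most one block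
  have uniq : ∀ y y' : Y, (∀ c : R, c • y = y) → (∀ c : R, c • y' = y') → y = y' := by
    intro y y' hy hy'
    by_contra hne
    apply hrl
    rw [← hRc, ← h.pair_right y y' hne]
    apply card_dvd_ncard_of_free
    · rintro c z ⟨h1, h2⟩
      refine ⟨?_, ?_⟩
      · have := h.inv c z y h1
        rwa [show ((c : MulAction.stabilizer G x) : G) • y = y from hy c] at this
      · have := h.inv c z y' h2
        rwa [show ((c : MulAction.stabilizer G x) : G) • y' = y' from hy' c] at this
    · rintro c z ⟨h1, -⟩ hc
      exact Subtype.ext (Subtype.ext (hfree _ z y h1 hc (hy c)))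
  have hmod : Nat.card Y ≡ 1 [MOD r] := by
    have hv : r ∣ Nat.card X - 1 := by
      by_contra hnd
      apply hrl
      have : r ^ k.factorization r ∣ lam * (Nat.card X - 1) := by
        rw [← h.count]
        exact Dvd.dvd.mul_right (Nat.ordProj_dvd k r) _
      exact (Nat.Coprime.pow_left _ ((Nat.Prime.coprime_iff_not_dvd hr).2 hnd)).dvd_of_dvd_mul_right
        this
    rw [← h.card_eq]
    have hk' := h.k_lt
    exact ((Nat.modEq_iff_dvd' (by omega)).2 hv).symm
  have hfp := R.isPGroup'.card_modEq_card_fixedPoints Y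
  obtain ⟨y, hy⟩ : (MulAction.fixedPoints R Y).Nonempty := by
    by_contra hne
    rw [Set.not_nonempty_iff_eq_empty] at hne
    rw [hne] at hfp
    have h3 := hmod.symm.trans hfp
    simp only [Nat.card_eq_fintype_card, Fintype.card_eq_zero, Nat.modEq_zero_iff_dvd] at h3
    exact hr.one_lt.ne' (Nat.dvd_one.1 h3)
  have hAy : ∀ a : G, a • x = x → a • y = y := by
    intro a ha
    apply uniq _ _ _ hy
    intro c
    change ((c : MulAction.stabilizer G x) : G) • a • y = a • y
    rw [← mul_smul, hcomm _ _ (hfixR c) ha, mul_smul]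
    congr 1
    exact hy c
  -- point and block stabilizers both have order `k`, so an inclusion suffices
  have heq : MulAction.stabilizer G x = MulAction.stabilizer G y := by
    apply Subgroup.eq_of_le_of_card_ge
    · intro a ha
      exact hAy a ha
    · rw [hk, h.dual.card_stabilizer (fun g y x hI hy hx => hfree g x y hI hx hy) y]
  refine ⟨y, heq.symm, ?_, ?_⟩
  · intro hI
    have : MulAction.stabilizer G x = ⊥ := by
      rw [eq_bot_iff]
      intro a ha
      exact hfree a x y hI ha (hAy a ha)
    rw [this] at hk
    simp at hk
    omega
  · intro x' hx'
    symm
    apply Set.eq_of_subset_of_ncard_le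
    · rintro _ ⟨a, rfl⟩
      have := h.inv a x' y hx'
      rwa [hAy a a.2] at this
    · rw [h.deg_right y, ← hk]
      rw [← Nat.card_coe_set_eq, Nat.card_congr (MulAction.orbitEquivQuotientStabilizer _ x')]
      have : MulAction.stabilizer (MulAction.stabilizer G x) x' = ⊥ := by
        rw [eq_bot_iff]
        intro a ha
        exact Subtype.ext (hfree a x' y hx' ha (hAy a a.2))
      rw [this]
      exact (Nat.card_congr QuotientGroup.quotientBot.toEquiv.symm).le
    · exact Set.toFinite _

end FlagAction

/-! ### The incidence matrix of a symmetric design -/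

theorem sum_blocks_eq_card {α : Type*} (𝓑 : Finset α) (p : α → Prop) [DecidablePred p] :
    (∑ C : 𝓑, if p C then (1 : ℚ) else 0) = (𝓑.filter p).card := by
  rw [Finset.sum_coe_sort 𝓑 (fun C => if p C then (1 : ℚ) else 0), Finset.sum_boole]

section Incidence

variable {𝓑 : Finset (Finset P)} {v k lam : ℕ}

/-- In a `2`-design every point lies in `r` blocks, where `r (k - 1) = lam (v - 1)`. -/
theorem IsDesign.degree_mul (hD : IsDesign 𝓑 v k lam) (x : P) :
    (𝓑.filter fun C => x ∈ C).card * (k - 1) = lam * (v - 1) := by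
  classical
  have key := Finset.sum_card_bipartiteAbove_eq_sum_card_bipartiteBelow
    (s := 𝓑.filter fun C => x ∈ C) (t := Finset.univ.erase x) (fun C y => y ∈ C)
  have h1 : ∀ C ∈ 𝓑.filter (fun C => x ∈ C),
      (Finset.bipartiteAbove (fun C y => y ∈ C) (Finset.univ.erase x) C).card = k - 1 := by
    intro C hC
    rw [Finset.mem_filter] at hC
    rw [← hD.blocks_card C hC.1, ← Finset.card_erase_of_mem hC.2]
    congr 1
    ext y
    simp [Finset.mem_bipartiteAbove]
  have h2 : ∀ y ∈ Finset.univ.erase x,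
      (Finset.bipartiteBelow (fun C y => y ∈ C) (𝓑.filter fun C => x ∈ C) y).card = lam := by
    intro y hy
    rw [← hD.pair_blocks x y (Finset.ne_of_mem_erase hy).symm]
    congr 1
    ext C
    simp [Finset.mem_bipartiteBelow, and_assoc]
  rw [Finset.sum_congr rfl h1, Finset.sum_congr rfl h2] at key
  simp only [Finset.sum_const, smul_eq_mul, Finset.card_erase_of_mem (Finset.mem_univ x),
    Finset.card_univ, hD.card_points] at key
  rw [key, mul_comm]

theorem IsDesign.degree (hD : IsDesign 𝓑 v k lam) (hsym : 𝓑.card = v) (x : P) :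
    (𝓑.filter fun C => x ∈ C).card = k := by
  classical
  have hk := hD.two_lt_k
  have hkv := hD.k_lt_v
  have hr : ∀ y, (𝓑.filter fun C => y ∈ C).card = (𝓑.filter fun C => x ∈ C).card := by
    intro y
    apply Nat.eq_of_mul_eq_mul_right (show 0 < k - 1 by omega)
    rw [hD.degree_mul, hD.degree_mul]
  have key := Finset.sum_card_bipartiteAbove_eq_sum_card_bipartiteBelow
    (s := (Finset.univ : Finset P)) (t := 𝓑) (fun y C => y ∈ C)
  have h2 : ∀ C ∈ 𝓑, (Finset.bipartiteBelow (fun y C => y ∈ C) Finset.univ C).card = k := by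
    intro C hC
    rw [← hD.blocks_card C hC]
    congr 1
    ext y
    simp [Finset.mem_bipartiteBelow]
  have h1 : ∀ y ∈ (Finset.univ : Finset P),
      (Finset.bipartiteAbove (fun y C => y ∈ C) 𝓑 y).card = (𝓑.filter fun C => x ∈ C).card :=
    fun y _ => hr y
  rw [Finset.sum_congr rfl h1, Finset.sum_congr rfl h2] at key
  simp only [Finset.sum_const, smul_eq_mul, Finset.card_univ, hD.card_points, hsym] at key
  exact Nat.eq_of_mul_eq_mul_left (show 0 < v by omega) key

/-- The incidence matrix over `ℚ`. -/
def incMatrix (𝓑 : Finset (Finset P)) : Matrix P 𝓑 ℚ :=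
  fun x C => if x ∈ (C : Finset P) then 1 else 0

/-- The inverse of the incidence matrix `N` of a symmetric design, read off from
`N Nᵀ = (k - lam) 1 + lam J`. -/
def incInv (𝓑 : Finset (Finset P)) (k lam : ℕ) : Matrix 𝓑 P ℚ :=
  fun C x => ((if x ∈ (C : Finset P) then 1 else 0) - (lam : ℚ) / k) / ((k : ℚ) - lam)

theorem IsDesign.lam_lt (hD : IsDesign 𝓑 v k lam) (hsym : 𝓑.card = v) : lam < k := by
  have h2 := hD.k_lt_v
  have h3 := hD.two_lt_k
  have : Nonempty P := Fintype.card_pos_iff.1 (by rw [hD.card_points]; omega)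
  have h1 := hD.degree_mul (Classical.arbitrary P)
  rw [hD.degree hsym] at h1
  by_contra hc
  have : k * (k - 1) < lam * (v - 1) := by
    calc k * (k-1) < k * (v - 1) := by
          apply Nat.mul_lt_mul_of_pos_left <;> omega
      _ ≤ _ := Nat.mul_le_mul_right _ (by omega)
  omega

theorem incMatrix_mul_incInv (hD : IsDesign 𝓑 v k lam) (hsym : 𝓑.card = v) :
    incMatrix 𝓑 * incInv 𝓑 k lam = 1 := by
  have hl : (lam : ℚ) < k := by exact_mod_cast hD.lam_lt hsym
  have hl0 : (0 : ℚ) < lam := by exact_mod_cast hD.lam_pos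
  have hne : (k : ℚ) - lam ≠ 0 := by linarith
  have hk : (k : ℚ) ≠ 0 := by linarith
  ext x y
  rw [Matrix.mul_apply]
  have e : ∀ C : 𝓑, incMatrix 𝓑 x C * incInv 𝓑 k lam C y =
      ((if x ∈ (C : Finset P) ∧ y ∈ (C : Finset P) then (1 : ℚ) else 0) -
        (lam : ℚ) / k * (if x ∈ (C : Finset P) then 1 else 0)) / ((k : ℚ) - lam) := by
    intro C
    unfold incMatrix incInv
    by_cases h1 : x ∈ (C : Finset P) <;> by_cases h2 : y ∈ (C : Finset P) <;> simp [h1, h2]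
  rw [Finset.sum_congr rfl fun C _ => e C, ← Finset.sum_div, Finset.sum_sub_distrib,
    ← Finset.mul_sum, sum_blocks_eq_card 𝓑 (fun C => x ∈ C),
    sum_blocks_eq_card 𝓑 (fun C => x ∈ C ∧ y ∈ C), hD.degree hsym]
  by_cases hxy : x = y
  · subst hxy
    simp only [and_self, hD.degree hsym, Matrix.one_apply_eq]
    field_simp
  · rw [hD.pair_blocks x y hxy, Matrix.one_apply_ne hxy]
    field_simp
    ring

theorem incInv_mul_incMatrix (hD : IsDesign 𝓑 v k lam) (hsym : 𝓑.card = v) :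
    incInv 𝓑 k lam * incMatrix 𝓑 = 1 := by
  have hc : Fintype.card P = Fintype.card 𝓑 := by
    rw [Fintype.card_coe, hsym, hD.card_points]
  exact (Matrix.mul_eq_one_comm_of_equiv (Fintype.card_eq.1 hc).some).1 (incMatrix_mul_incInv hD hsym)

/-- Any two blocks of a symmetric design meet in `lam` points. -/
theorem IsDesign.block_inter (hD : IsDesign 𝓑 v k lam) (hsym : 𝓑.card = v)
    {C C' : Finset P} (hC : C ∈ 𝓑) (hC' : C' ∈ 𝓑) (hne : C ≠ C') :
    (C ∩ C').card = lam := by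
  have hl : (lam : ℚ) < k := by exact_mod_cast hD.lam_lt hsym
  have hl0 : (0 : ℚ) < lam := by exact_mod_cast hD.lam_pos
  have hn : (k : ℚ) - lam ≠ 0 := by linarith
  have hk : (k : ℚ) ≠ 0 := by linarith
  have key := congrFun (congrFun (incInv_mul_incMatrix hD hsym) ⟨C, hC⟩) ⟨C', hC'⟩
  rw [Matrix.one_apply_ne (by simpa using hne), Matrix.mul_apply] at key
  have e : ∀ x : P, incInv 𝓑 k lam ⟨C, hC⟩ x * incMatrix 𝓑 x ⟨C', hC'⟩ =
      ((if x ∈ C ∩ C' then (1 : ℚ) else 0) -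
        (lam : ℚ) / k * (if x ∈ C' then 1 else 0)) / ((k : ℚ) - lam) := by
    intro x
    unfold incMatrix incInv
    by_cases h1 : x ∈ C <;> by_cases h2 : x ∈ C' <;> simp [h1, h2]
  rw [Finset.sum_congr rfl fun C _ => e C, ← Finset.sum_div, Finset.sum_sub_distrib,
    ← Finset.mul_sum, Finset.sum_boole, Finset.sum_boole] at key
  simp only [Finset.filter_univ_mem, hD.blocks_card C' hC'] at key
  rw [div_eq_zero_iff] at key
  have := key.resolve_right hn
  field_simp at this
  have h3 : ((C ∩ C').card : ℚ) = lam := by linarith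
  exact_mod_cast h3

/-- The action on blocks of a group of automorphisms of a design. -/
@[reducible]
def blockAction {G : Subgroup (Equiv.Perm P)} (hAut : IsAutGroup G 𝓑) : MulAction G 𝓑 where
  smul g C := ⟨g • (C : Finset P), hAut g g.2 C C.2⟩
  one_smul C := Subtype.ext (one_smul G (C : Finset P))
  mul_smul a b C := Subtype.ext (mul_smul a b (C : Finset P))

/-- An automorphism of a symmetric design fixes as many points as blocks: the incidence matrix is
invertible and intertwines the two permutation matrices, which hence have the same trace. -/
theorem IsDesign.fix_eq (hD : IsDesign 𝓑 v k lam) (hsym : 𝓑.card = v)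
    {G : Subgroup (Equiv.Perm P)} (hAut : IsAutGroup G 𝓑) (g : G) :
    (MulAction.fixedBy P g).ncard = (@MulAction.fixedBy G 𝓑 _ (blockAction hAut) g).ncard := by
  let _ := blockAction hAut
  have key : (MulAction.toPerm g : Equiv.Perm P).permMatrix ℚ * incMatrix 𝓑 =
      incMatrix 𝓑 * (MulAction.toPerm g : Equiv.Perm 𝓑).permMatrix ℚ := by
    ext x C
    rw [PEquiv.toMatrix_toPEquiv_mul, PEquiv.mul_toMatrix_toPEquiv]
    simp only [Matrix.submatrix_apply, incMatrix, id]
    have : g • x ∈ (C : Finset P) ↔ x ∈ ((g⁻¹ • C : 𝓑) : Finset P) := by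
      change _ ↔ x ∈ g⁻¹ • (C : Finset P)
      rw [← Finset.inv_smul_mem_iff, inv_inv]
    exact if_congr this rfl rfl
  have ht : ((MulAction.toPerm g : Equiv.Perm P).permMatrix ℚ).trace =
      ((MulAction.toPerm g : Equiv.Perm 𝓑).permMatrix ℚ).trace := by
    calc _ = ((MulAction.toPerm g : Equiv.Perm P).permMatrix ℚ *
            (incMatrix 𝓑 * incInv 𝓑 k lam)).trace := by
          rw [incMatrix_mul_incInv hD hsym, mul_one]
      _ = (incMatrix 𝓑 * ((MulAction.toPerm g : Equiv.Perm 𝓑).permMatrix ℚ *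
            incInv 𝓑 k lam)).trace := by
          rw [← Matrix.mul_assoc, key, Matrix.mul_assoc]
      _ = _ := by
          rw [Matrix.trace_mul_comm, Matrix.mul_assoc, incInv_mul_incMatrix hD hsym, mul_one]
  rw [Matrix.trace_permutation, Matrix.trace_permutation] at ht
  exact_mod_cast ht

theorem isFlagAction (hD : IsDesign 𝓑 v k lam) (hsym : 𝓑.card = v)
    {G : Subgroup (Equiv.Perm P)} (hAut : IsAutGroup G 𝓑) (hflag : IsFlagTransitive G 𝓑) :
    @FlagAction G P 𝓑 _ _ (blockAction hAut) (fun x C => x ∈ (C : Finset P)) k lam := by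
  let _ := blockAction hAut
  have hv := hD.card_points
  have hk := hD.two_lt_k
  have hkv := hD.k_lt_v
  have hvP : Nat.card P = v := by rw [Nat.card_eq_fintype_card, hv]
  have hcard : Nat.card P = Nat.card 𝓑 := by
    rw [hvP, Nat.card_eq_fintype_card, Fintype.card_coe, hsym]
  have hfl : ∀ g : G, (∀ x : P, g • x = x) → g = 1 := fun g hg =>
    Subtype.ext (Equiv.ext hg)
  have : Nonempty P := Fintype.card_pos_iff.1 (by omega)
  have aux : ∀ p : Finset P → Prop, ∀ [DecidablePred p],
      {C : 𝓑 | p C}.ncard = (𝓑.filter p).card := by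
    intro p _
    rw [← Set.ncard_image_of_injective _ Subtype.val_injective, ← Set.ncard_coe_finset]
    congr 1
    ext C
    simp [and_comm]
  refine ⟨?_, ?_, ?_, ?_, ?_, ?_, hcard, ?_, hD.fix_eq hsym hAut, hfl, ?_, hk, ?_, hD.lam_pos⟩
  · intro g x C h
    exact Finset.smul_mem_smul_finset h
  · intro x C x' C' h h'
    obtain ⟨g, hg, h1, h2⟩ := hflag C C.2 C' C'.2 x h x' h'
    exact ⟨⟨g, hg⟩, h1, Subtype.ext h2⟩
  · intro x
    rw [aux (fun C => x ∈ C), hD.degree hsym]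
  · intro C
    rw [← hD.blocks_card C C.2, ← Set.ncard_coe_finset]
    rfl
  · intro x x' hne
    rw [aux (fun C => x ∈ C ∧ x' ∈ C), hD.pair_blocks x x' hne]
  · intro C C' hne
    rw [← hD.block_inter hsym C.2 C'.2 (fun h => hne (Subtype.ext h)), ← Set.ncard_coe_finset]
    congr 1
    ext; simp
  · rw [hvP, ← hD.degree_mul (Classical.arbitrary P), hD.degree hsym]
  · intro g hg
    apply hfl
    have h1 := hD.fix_eq hsym hAut g
    have h2 : MulAction.fixedBy 𝓑 g = Set.univ := Set.eq_univ_of_forall hg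
    rw [h2, Set.ncard_univ, ← hcard] at h1
    have := Set.eq_of_subset_of_ncard_le (Set.subset_univ (MulAction.fixedBy P g))
      (by rw [Set.ncard_univ, h1]) (Set.toFinite _)
    intro x
    have hx : x ∈ MulAction.fixedBy P g := by rw [this]; trivial
    exact hx
  · rw [hvP]; exact hkv

end Incidence

/-! ### Primitive groups with abelian point stabilizers -/

/-- In a primitive group with abelian point stabilizers, non-identity elements fix at most one
point: an element fixing two points either lies in a point stabilizer that is normal, hence
trivial, or is centralized by two distinct maximal subgroups, hence central. -/
theorem eq_one_of_fix_two {G X : Type*} [Group G] [MulAction G X] [Nontrivial X]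
    [MulAction.IsPreprimitive G X] (faith : ∀ g : G, (∀ x : X, g • x = x) → g = 1)
    (hcomm : ∀ (x : X) (a b : G), a • x = x → b • x = x → a * b = b * a)
    {g : G} {y z : X} (hyz : y ≠ z) (hy : g • y = y) (hz : g • z = z) : g = 1 := by
  have cy := MulAction.IsPreprimitive.isCoatom_stabilizer_of_isPreprimitive (G := G) y
  have cz := MulAction.IsPreprimitive.isCoatom_stabilizer_of_isPreprimitive (G := G) z
  -- an element all of whose conjugates fix `y` fixes every point
  have normal : (∀ t : G, ∀ s : G, s • y = y → (t * s * t⁻¹) • y = y) → g = 1 := by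
    intro H
    apply faith
    intro x
    obtain ⟨t, rfl⟩ := MulAction.exists_smul_eq G y x
    have := H t⁻¹ g hy
    rw [inv_inv, mul_smul, mul_smul, inv_smul_eq_iff] at this
    exact this
  by_cases hle : MulAction.stabilizer G z ≤ MulAction.stabilizer G y
  · have heq : MulAction.stabilizer G z = MulAction.stabilizer G y := by
      by_contra hne
      exact cy.1 (cz.2 _ (lt_of_le_of_ne hle hne))
    obtain ⟨t, rfl⟩ := MulAction.exists_smul_eq G y z
    have hmem : t ∈ Subgroup.normalizer (MulAction.stabilizer G y : Set G) := by
      rw [Subgroup.mem_normalizer_iff]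
      intro s
      nth_rw 2 [← heq]
      rw [MulAction.mem_stabilizer_iff, MulAction.mem_stabilizer_iff, mul_smul, mul_smul,
        inv_smul_smul, smul_left_cancel_iff]
    have htop : Subgroup.normalizer (MulAction.stabilizer G y : Set G) = ⊤ := by
      apply cy.2
      refine lt_of_le_of_ne Subgroup.le_normalizer ?_
      intro he
      rw [SetLike.ext_iff] at he
      exact hyz ((he t).2 hmem).symm
    apply normal
    intro u s hs
    have hu : u ∈ Subgroup.normalizer (MulAction.stabilizer G y : Set G) := by
      rw [htop]; trivial
    exact (Subgroup.mem_normalizer_iff.1 hu s).1 hs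
  · have hC : Subgroup.centralizer {g} = ⊤ := by
      apply cy.2
      refine lt_of_le_of_ne ?_ ?_
      · intro a ha
        rw [Subgroup.mem_centralizer_singleton_iff]
        exact hcomm y _ _ ha hy
      · intro he
        apply hle
        rw [he]
        intro a ha
        rw [Subgroup.mem_centralizer_singleton_iff]
        exact hcomm z _ _ ha hz
    apply faith
    intro x
    obtain ⟨t, rfl⟩ := MulAction.exists_smul_eq G y x
    have ht : t ∈ Subgroup.centralizer {g} := by rw [hC]; trivial
    rw [Subgroup.mem_centralizer_singleton_iff] at ht
    rw [← mul_smul, ← ht, mul_smul, hy]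

/-- An abelian complement of a Frobenius group has a normal complement: the transfer into the
point stabilizer `A` maps `a ∈ A` to `a ^ |X|`, so it is an isomorphism on `A`. -/
theorem exists_frobenius_kernel {G X K : Type*} [Group G] [Finite G] [MulAction G X] [Finite X]
    [MulAction.IsPretransitive G X] [CommGroup K] (x : X) (e : MulAction.stabilizer G x ≃* K)
    (hfrob : ∀ g : G, g ≠ 1 → ∀ y z : X, g • y = y → g • z = z → y = z)
    (hco : (Nat.card (MulAction.stabilizer G x)).Coprime (Nat.card X)) :
    ∃ M : Subgroup G, M.Normal ∧ M.IsComplement' (MulAction.stabilizer G x) := by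
  set A := MulAction.stabilizer G x with hA
  let τ : G →* K := MonoidHom.transfer e.toMonoidHom
  have hidx : A.index = Nat.card X := MulAction.index_stabilizer_of_transitive G x
  have hτ : ∀ a : A, τ a = e a ^ Nat.card X := by
    intro a
    have key : ∀ (k : ℕ) (g₀ : G), g₀⁻¹ * (a : G) ^ k * g₀ ∈ A →
        g₀⁻¹ * (a : G) ^ k * g₀ = (a : G) ^ k := by
      intro k g₀ hk
      by_cases h1 : (a : G) ^ k = 1
      · simp [h1]
      have hak : (a : G) ^ k • x = x := (a ^ k).2
      have h2 : (a : G) ^ k • g₀ • x = g₀ • x := by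
        have : (g₀⁻¹ * (a : G) ^ k * g₀) • x = x := hk
        rwa [mul_smul, mul_smul, inv_smul_eq_iff] at this
      have h3 : g₀ ∈ A := hfrob _ h1 _ _ h2 hak
      have hc : a ^ k * ⟨g₀, h3⟩ = ⟨g₀, h3⟩ * a ^ k := by
        apply e.injective
        rw [map_mul, map_mul, mul_comm]
      have hc' : (a : G) ^ k * g₀ = g₀ * (a : G) ^ k := congrArg Subtype.val hc
      rw [mul_assoc, hc', inv_mul_cancel_left]
    have := MonoidHom.transfer_eq_pow e.toMonoidHom (a : G) key
    change MonoidHom.transfer e.toMonoidHom (a : G) = _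
    rw [this, ← hidx, ← map_pow]
    rfl
  have hinj : Function.Injective (τ.comp A.subtype) := by
    rw [injective_iff_map_eq_one]
    intro a ha
    have h1 : e (a ^ Nat.card X) = 1 := by
      rw [map_pow, ← hτ]; exact ha
    have h2 : a ^ Nat.card X = 1 := e.map_eq_one_iff.1 h1
    have h3 : orderOf a ∣ Nat.card X := orderOf_dvd_of_pow_eq_one h2
    have h4 : orderOf a ∣ 1 := hco ▸ Nat.dvd_gcd (orderOf_dvd_natCard a) h3
    exact orderOf_eq_one_iff.1 (Nat.dvd_one.1 h4)
  have hsurj : Function.Surjective (τ.comp A.subtype) := by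
    have : Finite K := Finite.of_equiv _ e.toEquiv
    have hb : Function.Injective (fun k : K => (τ.comp A.subtype) (e.symm k)) :=
      hinj.comp e.symm.injective
    intro k
    obtain ⟨k', hk'⟩ := Finite.surjective_of_injective hb k
    exact ⟨_, hk'⟩
  refine ⟨τ.ker, inferInstance, Subgroup.isComplement'_of_disjoint_and_mul_eq_univ ?_ ?_⟩
  · rw [Subgroup.disjoint_def]
    intro g hg hgA
    have := hinj (a₁ := ⟨g, hgA⟩) (a₂ := 1) (by simpa using hg)
    exact congrArg Subtype.val this
  · rw [Set.eq_univ_iff_forall]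
    intro g
    obtain ⟨a, ha⟩ := hsurj (τ g)
    refine ⟨g * (a : G)⁻¹, ?_, a, a.2, by simp⟩
    change τ (a : G) = τ g at ha
    simp [MonoidHom.mem_ker, ha]

section Kernel

variable {G : Type*} [Group G] {M A : Subgroup G}

/-- When the complement `A` is maximal, it acts irreducibly on the normal subgroup `M`. -/
theorem eq_bot_or_eq_of_invariant (hc : M.IsComplement' A) (hA : IsCoatom A)
    (L : Subgroup G) (hL : L ≤ M) (hinv : ∀ a ∈ A, ∀ l ∈ L, a * l * a⁻¹ ∈ L) :
    L = ⊥ ∨ L = M := by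
  by_cases h : L ≤ A
  · left
    rw [eq_bot_iff]
    exact (hc.disjoint.mono_left hL).le_bot.trans' (le_inf le_rfl h)
  · right
    have htop : L ⊔ A = ⊤ :=
      hA.2 _ (lt_of_le_of_ne le_sup_right fun he => h (he ▸ le_sup_left))
    refine le_antisymm hL fun m hm => ?_
    have hAL : A ≤ Subgroup.normalizer (L : Set G) := by
      intro a ha
      rw [Subgroup.mem_normalizer_iff]
      refine fun l => ⟨hinv a ha l, fun H => ?_⟩
      have := hinv a⁻¹ (A.inv_mem ha) _ H
      simpa [mul_assoc] using this
    have hm' : m ∈ (L ⊔ A : Subgroup G) := by rw [htop]; trivial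
    rw [← SetLike.mem_coe, Subgroup.coe_mul_of_right_le_normalizer_left _ _ hAL] at hm'
    obtain ⟨l, hl, a, ha, rfl⟩ := hm'
    have haM : a ∈ M := (M.mul_mem_cancel_left (hL hl)).1 hm
    have : a = 1 := by simpa using hc.disjoint.le_bot ⟨haM, ha⟩
    simpa [this] using hl

/-- A fixed-point-free automorphism `φ` of a finite group fixes a unique Sylow `p`-subgroup, since
the map `m ↦ m / φ m` is a bijection of the group. -/
theorem existsUnique_sylow_of_fixedPointFree {N : Type*} [Group N] [Finite N] (p : ℕ)
    [Fact p.Prime] (φ : MulAut N) (hφ : MonoidHom.FixedPointFree φ) :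
    ∃! S : Sylow p N, φ • S = S := by
  have hmul : ∀ (m : N) (S : Sylow p N), φ • m • S = φ m • φ • S := by
    intro m S
    rw [Sylow.smul_def, Sylow.smul_def, ← mul_smul, ← mul_smul]
    congr 1
    ext n
    simp
  obtain ⟨S₀⟩ : Nonempty (Sylow p N) := inferInstance
  obtain ⟨m, hm⟩ := MulAction.exists_smul_eq N S₀ (φ • S₀)
  obtain ⟨g, hg⟩ := hφ.commutatorMap_surjective m⁻¹
  have hS₁ : φ • g⁻¹ • S₀ = g⁻¹ • S₀ := by
    have : φ g⁻¹ * m = g⁻¹ := by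
      rw [← inv_inv m, ← hg]
      simp [MonoidHom.commutatorMap, div_eq_mul_inv]
    rw [hmul, ← hm, ← mul_smul, this]
  generalize g⁻¹ • S₀ = S at hS₁
  refine ⟨S, hS₁, ?_⟩
  intro T hT
  change φ • T = T at hT
  obtain ⟨t, rfl⟩ := MulAction.exists_smul_eq N S T
  rw [hmul, hS₁] at hT
  have hst : ∀ n : N, n • S = S → φ n • S = S := by
    intro n hn
    rw [← hS₁, ← hmul, hn]
  -- the commutator map permutes the stabilizer of `S`, and `t⁻¹` is sent into it
  let f : MulAction.stabilizer N S → MulAction.stabilizer N S := fun n =>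
    ⟨n / φ n, (MulAction.stabilizer N S).div_mem n.2 (hst n n.2)⟩
  have hf : Function.Injective f := by
    intro a b hab
    exact Subtype.ext (hφ.commutatorMap_injective (congrArg Subtype.val hab))
  have hmem : t⁻¹ / φ t⁻¹ ∈ MulAction.stabilizer N S := by
    rw [MulAction.mem_stabilizer_iff, map_inv, div_inv_eq_mul, mul_smul, hT, inv_smul_smul]
  obtain ⟨n, hn⟩ := Finite.surjective_of_injective hf ⟨_, hmem⟩
  have hnt : (n : N) = t⁻¹ := hφ.commutatorMap_injective (congrArg Subtype.val hn)
  have : t⁻¹ • S = S := hnt ▸ n.2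
  rw [inv_smul_eq_iff] at this
  exact this.symm

/-- A Frobenius kernel with abelian maximal complement is abelian. It has an `A`-invariant Sylow
subgroup, so it is a `p`-group, and its centre is a non-trivial invariant subgroup. -/
theorem kernel_comm [Finite G] [M.Normal] (hc : M.IsComplement' A) (hA : IsCoatom A)
    (hAc : ∀ a ∈ A, ∀ b ∈ A, a * b = b * a) {a : G} (ha : a ∈ A)
    (hfree : ∀ m ∈ M, a * m = m * a → m = 1) (hM : M ≠ ⊥) :
    ∀ m ∈ M, ∀ n ∈ M, m * n = n * m := by
  have hirr := eq_bot_or_eq_of_invariant hc hA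
  have hcard : Nat.card M ≠ 1 := by simpa using hM
  obtain ⟨p, hp, hpM⟩ := Nat.exists_prime_and_dvd hcard
  have : Fact p.Prime := ⟨hp⟩
  let φ : G →* MulAut M := MulAut.conjNormal
  have hφ : MonoidHom.FixedPointFree (φ a) := by
    intro m hm
    apply Subtype.ext
    apply hfree m m.2
    have : a * m * a⁻¹ = m := by simpa [φ] using congrArg Subtype.val hm
    rwa [mul_inv_eq_iff_eq_mul] at this
  obtain ⟨S, hS, huniq⟩ := existsUnique_sylow_of_fixedPointFree p (φ a) hφ
  have hSA : ∀ b ∈ A, φ b • S = S := by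
    intro b hb
    apply huniq
    change φ a • φ b • S = _
    rw [← mul_smul, ← map_mul, hAc a ha b hb, map_mul, mul_smul, hS]
  have hmap : ∀ L : Subgroup M, (∀ b ∈ A, ∀ l ∈ L, φ b l ∈ L) → L = ⊥ ∨ L = ⊤ := by
    intro L hL
    refine (hirr (L.map M.subtype) (Subgroup.map_subtype_le L) ?_).imp ?_ ?_
    · rintro b hb _ ⟨l, hl, rfl⟩
      exact ⟨φ b l, hL b hb l hl, by simp [φ]⟩
    · intro h
      rwa [Subgroup.map_eq_bot_iff_of_injective _ M.subtype_injective] at h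
    · intro h
      rw [eq_top_iff]
      rintro ⟨m, hm⟩ -
      rw [← h] at hm
      obtain ⟨l, hl, rfl⟩ := hm
      exact hl
  have hStop : (S : Subgroup M) = ⊤ := by
    refine (hmap S ?_).resolve_left (S.ne_bot_of_dvd_card hpM)
    intro b hb l hl
    have : φ b • l ∈ φ b • (S : Subgroup M) := Subgroup.smul_mem_pointwise_smul _ _ _ hl
    rw [← Sylow.pointwise_smul_def, hSA b hb] at this
    exact this
  have hpg : IsPGroup p M := by
    have := S.isPGroup'
    rw [hStop] at this
    exact this.of_equiv Subgroup.topEquiv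
  have : Nontrivial M := (Subgroup.nontrivial_iff_ne_bot M).2 hM
  have hcn : Nontrivial (Subgroup.center M) := hpg.center_nontrivial
  have hZ : Subgroup.center M = ⊤ := by
    refine (hmap _ ?_).resolve_left ((Subgroup.nontrivial_iff_ne_bot _).1 hcn)
    intro b _ l hl
    rw [Subgroup.mem_center_iff] at hl ⊢
    intro g
    have := congrArg (φ b) (hl ((φ b).symm g))
    simpa using this
  intro m hm n hn
  have h1 : (⟨n, hn⟩ : M) ∈ Subgroup.center M := by rw [hZ]; trivial
  exact congrArg Subtype.val (Subgroup.mem_center_iff.1 h1 ⟨m, hm⟩)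

end Kernel

/-! ### Irreducible abelian linear groups and fields -/

/-- A finite irreducible module `V` of a commutative group `K` is a one-dimensional space over a
finite field in which `K` acts by multiplications. By Schur's lemma, `V` is a simple module over
the commutative ring `ℤ[K]`, hence isomorphic to a quotient of it by a maximal ideal. -/
theorem exists_field_of_irreducible {K V : Type*} [CommGroup K] [AddCommGroup V] [Finite V]
    [Nontrivial V] (ρ : Representation ℤ K V)
    (hirr : ∀ W : AddSubgroup V, (∀ c : K, ∀ w ∈ W, ρ c w ∈ W) → W = ⊥ ∨ W = ⊤) :
    ∃ (F : Type) (_ : Field F) (_ : Fintype F) (ι : V ≃ F) (χ : K →* F),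
      (∀ a b, ι (a + b) = ι a + ι b) ∧ ∀ c w, ι (ρ c w) = χ c * ι w := by
  have hs : IsSimpleModule (MonoidAlgebra ℤ K) ρ.asModule := by
    have : Nontrivial ρ.asModule := ρ.asModuleEquiv.toEquiv.nontrivial
    rw [isSimpleModule_iff]
    refine ⟨fun W => ?_⟩
    let W' : AddSubgroup V := W.toAddSubgroup.map (ρ.asModuleEquiv : ρ.asModule →+ V)
    have hW' : ∀ w : ρ.asModule, ρ.asModuleEquiv w ∈ W' ↔ w ∈ W := by
      intro w
      constructor
      · rintro ⟨u, hu, h⟩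
        exact ρ.asModuleEquiv.injective h ▸ hu
      · exact fun h => ⟨w, h, rfl⟩
    refine (hirr W' ?_).imp ?_ ?_
    · rintro c _ ⟨w, hw, rfl⟩
      refine ⟨MonoidAlgebra.of ℤ K c • w, W.smul_mem _ hw, ?_⟩
      change ρ.asModuleEquiv _ = ρ c (ρ.asModuleEquiv w)
      rw [Representation.asModuleEquiv_map_smul, Representation.asAlgebraHom_of]
    · intro h
      rw [eq_bot_iff]
      intro w hw
      have := (hW' w).2 hw
      rw [h, AddSubgroup.mem_bot] at this
      exact ρ.asModuleEquiv.map_eq_zero_iff.1 this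
    · intro h
      rw [eq_top_iff]
      intro w _
      rw [← hW', h]
      trivial
  obtain ⟨J, hJ, ⟨e⟩⟩ := isSimpleModule_iff_quot_maximal.1 hs
  let _ : Field (MonoidAlgebra ℤ K ⧸ J) := Ideal.Quotient.field J
  let e' : V ≃ MonoidAlgebra ℤ K ⧸ J := ρ.asModuleEquiv.symm.toEquiv.trans e.toEquiv
  have : Finite (MonoidAlgebra ℤ K ⧸ J) := Finite.of_equiv V e'
  let r := Shrink.ringEquiv.{0} (MonoidAlgebra ℤ K ⧸ J)
  refine ⟨Shrink.{0} (MonoidAlgebra ℤ K ⧸ J), inferInstance, Fintype.ofFinite _,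
    e'.trans r.symm.toEquiv,
    (r.symm.toRingHom.toMonoidHom).comp
      ((Ideal.Quotient.mk J).toMonoidHom.comp (MonoidAlgebra.of ℤ K)),
    ?_, ?_⟩
  · intro a b
    change r.symm (e (ρ.asModuleEquiv.symm (a + b))) =
      r.symm (e (ρ.asModuleEquiv.symm a)) + r.symm (e (ρ.asModuleEquiv.symm b))
    rw [map_add, map_add, map_add]
  · intro c w
    change r.symm (e (ρ.asModuleEquiv.symm (ρ c w))) =
      r.symm (Ideal.Quotient.mk J (MonoidAlgebra.of ℤ K c)) * r.symm (e (ρ.asModuleEquiv.symm w))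
    rw [← map_mul, Representation.asModuleEquiv_symm_map_rho, map_smul]
    congr 1

/-- There is no difference set `T` of odd order `n = k - lam > 1` in an elementary abelian
`2`-group. For a prime `p ∣ n`, the element `D = ∑ t ∈ T, [t]` of the group ring over `ZMod p`
satisfies `D ^ 2 = lam • Σ`, where `Σ` is the sum of all group elements, whereas `D ^ p = D` as
`p` is odd. Hence `D` is a multiple of `Σ`, which is absurd. -/
theorem no_difference_set {F : Type*} [AddCommGroup F] [Fintype F] [DecidableEq F]
    (h2 : ∀ a : F, a + a = 0) (T : Finset F) {lam : ℕ} (hlt : lam < T.card)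
    (hn : Odd (T.card - lam)) (hn1 : T.card - lam ≠ 1) (hT : T ≠ Finset.univ)
    (hdiff : ∀ f : F, f ≠ 0 → (T.filter fun a => f + a ∈ T).card = lam) : False := by
  obtain ⟨p, hp, hpn⟩ := Nat.exists_prime_and_dvd hn1
  have : Fact p.Prime := ⟨hp⟩
  have hpodd : Odd p := hn.of_dvd_nat hpn
  have hkl : (T.card : ZMod p) = lam := by
    have := (ZMod.natCast_eq_zero_iff _ _).2 hpn
    rw [Nat.cast_sub hlt.le, sub_eq_zero] at this
    exact this
  let s : F → AddMonoidAlgebra (ZMod p) F := fun f => AddMonoidAlgebra.single f 1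
  have hsmul : ∀ a b, s a * s b = s (a + b) := by
    intro a b
    simp [s, AddMonoidAlgebra.single_mul_single]
  set D := ∑ t ∈ T, s t with hD
  set S := ∑ f, s f with hS
  have hsS : ∀ a, s a * S = S := by
    intro a
    rw [hS, Finset.mul_sum]
    simp only [hsmul]
    exact Fintype.sum_equiv (Equiv.addLeft a) _ _ fun _ => rfl
  have hDS : D * S = T.card • S := by
    rw [hD, Finset.sum_mul, Finset.sum_congr rfl fun a _ => hsS a, Finset.sum_const]
  have hSS : S * S = Fintype.card F • S := by
    nth_rw 1 [hS]
    rw [Finset.sum_mul, Finset.sum_congr rfl fun a _ => hsS a, Finset.sum_const,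
      Finset.card_univ]
  have hcast : ∀ (n : ℕ) (w : AddMonoidAlgebra (ZMod p) F), n • w = (n : ZMod p) • w := by
    intro n w
    rw [Nat.cast_smul_eq_nsmul]
  have hDD : D * D = lam • S := by
    have h1 : ∀ a ∈ T, s a * D = ∑ f, if f + a ∈ T then s f else 0 := by
      intro a _
      rw [hD, Finset.mul_sum]
      simp only [hsmul]
      rw [← Finset.sum_filter]
      refine Finset.sum_bij' (fun b _ => a + b) (fun f _ => f + a) ?_ ?_ ?_ ?_ ?_
      · intro b hb
        simpa [add_right_comm, h2] using hb
      · intro f hf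
        simpa using hf
      · intro b _
        simp only [add_right_comm a b a, h2, zero_add]
      · intro f _
        simp only [add_comm f a, ← add_assoc, h2, zero_add]
      · intro b _
        rfl
    nth_rw 1 [hD]
    rw [Finset.sum_mul, Finset.sum_congr rfl h1, Finset.sum_comm, hS, Finset.smul_sum]
    apply Finset.sum_congr rfl
    intro f _
    rw [← Finset.sum_filter, Finset.sum_const]
    by_cases hf : f = 0
    · subst hf
      simp only [zero_add, Finset.filter_mem_eq_inter, Finset.inter_self]
      rw [hcast, hcast, hkl]
    · rw [hdiff f hf]
  have hpow : ∀ j : ℕ, ∃ c : ZMod p, D * (D * D) ^ (j + 1) = c • S := by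
    intro j
    induction j with
    | zero =>
      refine ⟨(lam : ZMod p) * (T.card : ZMod p), ?_⟩
      rw [zero_add, pow_one, hDD, mul_smul_comm, hDS, hcast, hcast, smul_smul]
    | succ j ih =>
      obtain ⟨c, hc⟩ := ih
      refine ⟨c * ((lam : ZMod p) * (Fintype.card F : ZMod p)), ?_⟩
      rw [pow_succ, ← mul_assoc, hc, hDD, smul_mul_assoc, mul_smul_comm, hSS, hcast, hcast,
        smul_smul, smul_smul, mul_assoc]
  have hDp : D ^ p = D := by
    have : CharP (AddMonoidAlgebra (ZMod p) F) p :=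
      charP_of_injective_algebraMap (FaithfulSMul.algebraMap_injective (ZMod p) _) p
    rw [hD, sum_pow_char]
    apply Finset.sum_congr rfl
    intro t _
    obtain ⟨m, rfl⟩ := hpodd
    simp only [s, AddMonoidAlgebra.single_pow, one_pow]
    congr 1
    rw [succ_nsmul, mul_comm, mul_nsmul, two_nsmul, h2, zero_add]
  obtain ⟨m, hm⟩ := hpodd
  have hm1 : 1 ≤ m := by
    have := hp.two_le
    omega
  obtain ⟨c, hc⟩ := hpow (m - 1)
  have hDe : D = D * (D * D) ^ m := by
    nth_rw 1 [← hDp]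
    rw [show D ^ p = D ^ (2 * m + 1) from congrArg (D ^ ·) hm, pow_succ', pow_mul, pow_two]
  have hDc : D = c • S := by
    rw [← hc, Nat.sub_add_cancel hm1]
    rw [← hDe]
  have hcoefS : ∀ f : F, (c • S).coeff f = c := by
    intro f
    simp [hS, s, Finsupp.single_apply]
  have hcoefD : ∀ f : F, D.coeff f = if f ∈ T then 1 else 0 := by
    intro f
    simp [hD, s, Finsupp.finsetSum_apply, Finsupp.single_apply]
  obtain ⟨t, ht⟩ : T.Nonempty := Finset.card_pos.1 (by omega)
  obtain ⟨u, hu⟩ : ∃ u, u ∉ T := by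
    by_contra hcon
    push Not at hcon
    exact hT (Finset.eq_univ_iff_forall.2 hcon)
  have e1 : D.coeff t = D.coeff u := by rw [hDc, hcoefS, hcoefS]
  rw [hcoefD, hcoefD, if_pos ht, if_neg hu] at e1
  exact one_ne_zero e1

/-! ### Parity of the valency and of the number of points -/

theorem even_ncard_of_involution {G Y : Type*} [Group G] [MulAction G Y] [Finite Y] {t : G}
    (ht : t * t = 1) (s : Set Y) (hs : ∀ y ∈ s, t • y ∈ s) (hfix : ∀ y ∈ s, t • y ≠ y) :
    Even s.ncard := by
  classical
  have hfin := s.toFinite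
  have key : ∑ y ∈ hfin.toFinset, (1 : ZMod 2) = 0 := by
    refine Finset.sum_involution (fun y _ => t • y) (fun _ _ => by decide) ?_ ?_ ?_
    · intro y hy _
      exact hfix y (hfin.mem_toFinset.1 hy)
    · intro y hy
      exact hfin.mem_toFinset.2 (hs y (hfin.mem_toFinset.1 hy))
    · intro y _
      rw [← mul_smul, ht, one_smul]
  rw [Finset.sum_const, nsmul_eq_mul, mul_one, ← Set.ncard_eq_toFinset_card s hfin] at key
  exact (ZMod.natCast_eq_zero_iff_even).1 key

namespace FlagAction

variable {G X Y : Type*} [Group G] [MulAction G X] [MulAction G Y]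
    {I : X → Y → Prop} {k lam : ℕ}

/-- If `G` is Frobenius on points with abelian point stabilizers, then `k` is odd: an involution
`t` of `G_x` fixes a unique block `y`, so that for `x' ≠ x` the number `lam` of blocks through
`x'` and `t • x'` would be odd if `x'` lies on `y` and even otherwise. -/
theorem odd_valency [Finite G] [Finite X] [Finite Y] (h : FlagAction G X Y I k lam)
    (hfree : ∀ (g : G) x y, I x y → g • x = x → g • y = y → g = 1)
    (hfrob : ∀ g : G, g ≠ 1 → ∀ y z : X, g • y = y → g • z = z → y = z) (x : X)
    (hcomm : ∀ a b : G, a • x = x → b • x = x → a * b = b * a) : Odd k := by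
  rw [← Nat.not_even_iff_odd]
  intro hk
  obtain ⟨y, hst, -, -⟩ := h.exists_stabilizer_eq hfree x hcomm
  have : Fact (Nat.Prime 2) := ⟨Nat.prime_two⟩
  obtain ⟨⟨t, htx⟩, ht⟩ := exists_prime_orderOf_dvd_card' (G := MulAction.stabilizer G x) 2
    (by rw [h.card_stabilizer hfree x]; exact hk.two_dvd)
  rw [Subgroup.orderOf_mk] at ht
  have ht1 : t ≠ 1 := by
    rintro rfl
    simp at ht
  have htt : t * t = 1 := by rw [← pow_two, ← ht, pow_orderOf_eq_one]
  have hty : t • y = y := by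
    rw [← hst] at htx
    exact htx
  have hfx : MulAction.fixedBy X t = {x} := by
    ext z
    exact ⟨fun hz => hfrob t ht1 z x hz htx, fun hz => by rw [hz]; exact htx⟩
  have hfy : ∀ z : Y, t • z = z → z = y := by
    have h1 := h.fix t
    rw [hfx, Set.ncard_singleton] at h1
    obtain ⟨w, hw⟩ := Set.ncard_eq_one.1 h1.symm
    have hyw : y ∈ MulAction.fixedBy Y t := hty
    intro z hz
    have hzw : z ∈ MulAction.fixedBy Y t := hz
    rw [hw] at hyw hzw
    exact hzw.trans hyw.symm
  have hinv : ∀ x' z, I x' z ∧ I (t • x') z → I x' (t • z) ∧ I (t • x') (t • z) := by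
    intro x' z hz
    refine ⟨?_, h.inv _ _ _ hz.1⟩
    have := h.inv t _ _ hz.2
    rwa [← mul_smul, htt, one_smul] at this
  have hcard : ∀ x', x' ≠ x → {z | I x' z ∧ I (t • x') z}.ncard = lam := by
    intro x' hx'
    exact h.pair_left _ _ fun he => hx' (hfrob t ht1 x' x he.symm htx)
  have heven : Even lam := by
    obtain ⟨x', hx', hxy⟩ : ∃ x', x' ≠ x ∧ ¬ I x' y := by
      by_contra hcon
      push Not at hcon
      have h1 : (Set.univ : Set X) ⊆ insert x {z | I z y} := by
        intro z _
        by_cases hz : z = x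
        · exact Or.inl hz
        · exact Or.inr (hcon z hz)
      have h2 := (Set.ncard_le_ncard h1).trans (Set.ncard_insert_le _ _)
      rw [Set.ncard_univ, h.deg_right] at h2
      have := h.k_lt
      omega
    rw [← hcard x' hx']
    refine even_ncard_of_involution htt _ (hinv x') ?_
    intro z hz he
    exact hxy (hfy z he ▸ hz.1)
  have hodd : Odd lam := by
    obtain ⟨x', hx', hxy⟩ : ∃ x', x' ≠ x ∧ I x' y := by
      by_contra hcon
      push Not at hcon
      have h1 : {z | I z y} ⊆ {x} := fun z hz => by
        by_contra hzx
        exact hcon z hzx hz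
      have h2 := Set.ncard_le_ncard h1
      rw [Set.ncard_singleton, h.deg_right] at h2
      have := h.two_lt
      omega
    have hyS : y ∈ {z | I x' z ∧ I (t • x') z} := by
      refine ⟨hxy, ?_⟩
      have := h.inv t _ _ hxy
      rwa [hty] at this
    have h3 : Even ({z | I x' z ∧ I (t • x') z} \ {y}).ncard := by
      refine even_ncard_of_involution htt _ ?_ ?_
      · rintro z ⟨hz, hzy⟩
        refine ⟨hinv x' z hz, fun he => hzy ?_⟩
        have h4 : t • z = y := he
        rw [← hty] at h4
        exact MulAction.injective t h4
      · rintro z ⟨_, hzy⟩ he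
        exact hzy (hfy z he)
    have h4 := Set.ncard_sdiff_singleton_add_one hyS
    rw [hcard x' hx'] at h4
    rw [← h4]
    exact h3.add_one
  exact Nat.not_even_iff_odd.2 hodd heven

end FlagAction

/-! ### Primitive Frobenius groups with abelian complement are affine -/

/-- A primitive Frobenius group with non-trivial abelian point stabilizer `K` acts on the points as
a group of maps `t ↦ a t + b` of a finite field, containing all translations, and `K` is cyclic as
it embeds into the multiplicative group. -/
theorem exists_field_of_frobenius {G X K : Type*} [Group G] [Finite G] [MulAction G X] [Finite X]
    [Nontrivial X] [MulAction.IsPreprimitive G X] [CommGroup K]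
    (x : X) (e : MulAction.stabilizer G x ≃* K)
    (hA1 : MulAction.stabilizer G x ≠ ⊥)
    (hfrob : ∀ g : G, g ≠ 1 → ∀ y z : X, g • y = y → g • z = z → y = z) :
    IsCyclic K ∧ ∃ (F : Type) (_ : Field F) (_ : Fintype F) (ε : X ≃ F),
      (∀ g : G, ∃ a b : F, a ≠ 0 ∧ ∀ z, ε (g • z) = a * ε z + b) ∧
      ∀ b : F, ∃ g : G, ∀ z, ε (g • z) = ε z + b := by
  have hA := MulAction.IsPreprimitive.isCoatom_stabilizer_of_isPreprimitive (G := G) x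
  -- the stabilizer acts freely on the other points
  have hdvd : Nat.card (MulAction.stabilizer G x) ∣ Nat.card X - 1 := by
    have h1 : ({x}ᶜ : Set X).ncard = Nat.card X - 1 := by
      rw [Set.ncard_compl, Set.ncard_singleton]
    rw [← h1]
    refine card_dvd_ncard_of_free _ ?_ ?_
    · intro a z hz ha
      refine hz (MulAction.injective a (ha.trans ?_))
      exact a.2.symm
    · intro a z hz ha
      by_contra hne
      exact hz (hfrob a (by simpa using hne) z x ha a.2)
  have hco : (Nat.card (MulAction.stabilizer G x)).Coprime (Nat.card X) := by
    refine Nat.Coprime.coprime_dvd_left hdvd ?_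
    have : 0 < Nat.card X := Nat.card_pos
    rw [Nat.coprime_self_sub_left (by omega)]
    exact Nat.coprime_one_left _
  obtain ⟨M, hMn, hc⟩ := exists_frobenius_kernel x e hfrob hco
  have hAc : ∀ a ∈ MulAction.stabilizer G x, ∀ b ∈ MulAction.stabilizer G x, a * b = b * a := by
    intro a ha b hb
    have := e.injective (a₁ := ⟨a, ha⟩ * ⟨b, hb⟩) (a₂ := ⟨b, hb⟩ * ⟨a, ha⟩)
      (by rw [map_mul, map_mul, mul_comm])
    exact congrArg Subtype.val this
  have hdisj : ∀ m ∈ M, m • x = x → m = 1 := fun m hm hx =>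
    Subgroup.disjoint_def.1 hc.disjoint hm hx
  have hdec : ∀ g : G, ∃ m ∈ M, ∃ a : G, a • x = x ∧ g = m * a := by
    intro g
    obtain ⟨⟨m, a⟩, hma⟩ := hc.2 g
    exact ⟨m, m.2, a, a.2, hma.symm⟩
  have hfree : ∀ a : G, a • x = x → a ≠ 1 → ∀ m ∈ M, a * m = m * a → m = 1 := by
    intro a ha ha1 m hm hcm
    refine hdisj m hm (hfrob a ha1 _ _ ?_ ha)
    rw [← mul_smul, hcm, mul_smul, ha]
  -- `M` is regular on the points, so that `β` identifies the two
  have hβ : Function.Bijective (fun m : M => (m : G) • x) := by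
    constructor
    · intro m n hmn
      have : ((n : G)⁻¹ * m : G) = 1 := by
        refine hdisj _ (M.mul_mem (M.inv_mem n.2) m.2) ?_
        rw [mul_smul, inv_smul_eq_iff]
        exact hmn
      exact Subtype.ext (inv_mul_eq_one.1 this).symm
    · intro z
      obtain ⟨g, rfl⟩ := MulAction.exists_smul_eq G x z
      obtain ⟨m, hm, a, ha, rfl⟩ := hdec g
      exact ⟨⟨m, hm⟩, by rw [mul_smul, ha]⟩
  have hMnt : Nontrivial M := (Equiv.ofBijective _ hβ).nontrivial
  have hM : M ≠ ⊥ := (Subgroup.nontrivial_iff_ne_bot M).1 hMnt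
  obtain ⟨⟨a, ha⟩, ha1⟩ := Subgroup.ne_bot_iff_exists_ne_one.1 hA1
  have hMc := kernel_comm hc hA hAc ha (hfree a ha (by simpa using ha1)) hM
  let _ : CommGroup M :=
    { (inferInstance : Group M) with mul_comm := fun m n => Subtype.ext (hMc m m.2 n n.2) }
  -- `K` acts on `M`, written additively, by conjugation
  let ρ : Representation ℤ K (Additive M) :=
    { toFun := fun c => (MonoidHom.toAdditive
        (MulAut.conjNormal ((e.symm c : MulAction.stabilizer G x) : G) : MulAut M).toMonoidHom
        ).toIntLinearMap
      map_one' := by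
        ext m
        simp
      map_mul' := by
        intro c d
        ext m
        simp }
  have hρ : ∀ (c : K) (m : Additive M), ((ρ c m).toMul : G) =
      (e.symm c : MulAction.stabilizer G x) * (m.toMul : G) *
        ((e.symm c : MulAction.stabilizer G x) : G)⁻¹ := by
    intro c m
    exact MulAut.conjNormal_apply _ _
  obtain ⟨F, hF, hFt, ι, χ, hadd, hmul⟩ := exists_field_of_irreducible ρ (by
    intro W hW
    let L : Subgroup G := (AddSubgroup.toSubgroup' W).map M.subtype
    have hL : ∀ m : M, (m : G) ∈ L ↔ Additive.ofMul m ∈ W := by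
      intro m
      exact Subgroup.mem_map_iff_mem M.subtype_injective
    have hLM : L ≤ M := Subgroup.map_subtype_le _
    refine (eq_bot_or_eq_of_invariant hc hA L hLM ?_).imp ?_ ?_
    · intro a ha l hl
      have h1 := hW (e ⟨a, ha⟩) (Additive.ofMul ⟨l, hLM hl⟩) ((hL _).1 hl)
      have h2 := (hL (ρ (e ⟨a, ha⟩) (Additive.ofMul ⟨l, hLM hl⟩)).toMul).2 h1
      rw [hρ, e.symm_apply_apply] at h2
      exact h2
    · intro h
      rw [eq_bot_iff]
      intro w hw
      have h1 := (hL w.toMul).2 hw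
      rw [h, Subgroup.mem_bot] at h1
      exact Subtype.ext h1
    · intro h
      rw [eq_top_iff]
      intro w _
      refine (hL w.toMul).1 ?_
      rw [h]
      exact w.toMul.2)
  have hinj : Function.Injective χ := by
    rw [injective_iff_map_eq_one]
    intro c hc1
    by_contra hne
    obtain ⟨m, hm⟩ := exists_ne (1 : M)
    refine hm (Subtype.ext (hfree (e.symm c : MulAction.stabilizer G x) (e.symm c).2 ?_ m m.2 ?_))
    · simpa using hne
    · have h1 := hmul c (Additive.ofMul m)
      rw [hc1, one_mul] at h1
      have h2 := hρ c (Additive.ofMul m)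
      rw [ι.injective h1] at h2
      exact (mul_inv_eq_iff_eq_mul.1 h2.symm)
  let β := Equiv.ofBijective _ hβ
  have hβs : ∀ (m : M) (c : K) (z : X), β.symm
      (((m : G) * (e.symm c : MulAction.stabilizer G x)) • z) =
        m * (ρ c (Additive.ofMul (β.symm z))).toMul := by
    intro m c z
    rw [Equiv.symm_apply_eq]
    obtain ⟨n, rfl⟩ := β.surjective z
    rw [Equiv.symm_apply_apply]
    change _ = ((m : G) * ((ρ c (Additive.ofMul n)).toMul : M)) • x
    have h1 : ((e.symm c : MulAction.stabilizer G x) : G) • x = x := (e.symm c).2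
    change _ • ((n : G) • x) = _
    rw [hρ, toMul_ofMul, ← mul_assoc, ← mul_assoc, mul_smul _ _ x, inv_smul_eq_iff.2 h1.symm,
      mul_smul _ _ x]
  have hact : ∀ (m : M) (c : K) (z : X), ι (Additive.ofMul (β.symm
      (((m : G) * (e.symm c : MulAction.stabilizer G x)) • z))) =
        χ c * ι (Additive.ofMul (β.symm z)) + ι (Additive.ofMul m) := by
    intro m c z
    rw [hβs, ofMul_mul, hadd, ofMul_toMul, hmul, add_comm]
  have : Finite K := Finite.of_equiv _ e.toEquiv
  refine ⟨isCyclic_of_injective_ringHom χ hinj, F, hF, hFt, β.symm.trans (Additive.ofMul.trans ι),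
    ?_, ?_⟩
  · intro g
    obtain ⟨m, hm, a, ha, rfl⟩ := hdec g
    refine ⟨χ (e ⟨a, ha⟩), ι (Additive.ofMul ⟨m, hm⟩), ((Group.isUnit _).map χ).ne_zero, ?_⟩
    intro z
    have := hact ⟨m, hm⟩ (e ⟨a, ha⟩) z
    rw [e.symm_apply_apply] at this
    exact this
  · intro b
    refine ⟨(ι.symm b).toMul, fun z => ?_⟩
    have := hact (ι.symm b).toMul 1 z
    rw [map_one, map_one, one_mul, ofMul_toMul, ι.apply_symm_apply, OneMemClass.coe_one,
      mul_one] at this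
    exact this

/-! ### The primitive case -/

namespace FlagAction

variable {G X Y : Type*} [Group G] [MulAction G X] [MulAction G Y]
    {I : X → Y → Prop} {k lam : ℕ}

/-- If `k` is odd and `G` contains the translations of a field structure on the points, then the
number of points is odd: otherwise the field has characteristic two, and a block is a difference
set of odd order in its additive group. -/
theorem odd_card_field [Finite X] (h : FlagAction G X Y I k lam) (hk : Odd k)
    {F : Type*} [Field F] [Fintype F] (ε : X ≃ F)
    (htr : ∀ b : F, ∃ g : G, ∀ z, ε (g • z) = ε z + b) (y : Y)
    (hy : ∀ g : G, g • y = y → ∃ x : X, g • x = x) : Odd (Fintype.card F) := by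
  classical
  rw [← Nat.not_even_iff_odd]
  intro hev
  have hcard : Nat.card X = Fintype.card F := by
    rw [Nat.card_congr ε, Nat.card_eq_fintype_card]
  have hlt := h.lam_lt
  have hkv := h.k_lt
  have hcount := h.count
  have hk2 := h.two_lt
  have hlev : Even lam := by
    have h1 : Even (lam * (Nat.card X - 1)) := by
      rw [← hcount]
      exact Even.mul_left (hk.tsub_odd odd_one) k
    rw [Nat.even_mul] at h1
    refine h1.resolve_right ?_
    rw [Nat.not_even_iff_odd, hcard]
    exact Nat.Even.sub_odd (by omega) hev odd_one
  have h2 : ∀ a : F, a + a = 0 := by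
    obtain ⟨p, hchar, n, hp, hpn⟩ := FiniteField.card' F
    rw [hpn, Nat.even_pow] at hev
    have := (hp.even_iff).1 hev.1
    subst this
    intro a
    exact CharTwo.add_self_eq_zero a
  have hncard : ∀ q : X → Prop, {z | q z}.ncard =
      (Finset.univ.filter fun f : F => q (ε.symm f)).card := by
    intro q
    rw [← Set.ncard_coe_finset]
    refine Set.ncard_congr' (ε.subtypeEquiv ?_)
    intro z
    simp
  have hT : (Finset.univ.filter fun f : F => I (ε.symm f) y).card = k := by
    rw [← hncard fun z => I z y, h.deg_right]
  refine no_difference_set h2 (Finset.univ.filter fun f : F => I (ε.symm f) y) (lam := lam)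
    ?_ ?_ ?_ ?_ ?_
  · rw [hT]
    exact hlt
  · rw [hT]
    exact Nat.Odd.sub_even hlt.le hk hlev
  · rw [hT]
    -- order one would force `k = v - 1`
    intro h1
    obtain rfl : lam = k - 1 := by omega
    rw [mul_comm] at hcount
    have := Nat.eq_of_mul_eq_mul_left (by omega) hcount
    omega
  · intro hu
    have := congrArg Finset.card hu
    rw [hT, Finset.card_univ] at this
    omega
  · intro f hf
    -- a translation by `f ≠ 0` has no fixed point, so it moves the block `y`
    obtain ⟨g, hg⟩ := htr f
    have hgy : y ≠ g⁻¹ • y := by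
      intro he
      obtain ⟨z, hz⟩ := hy g (by rw [he, smul_inv_smul, ← he])
      have := hg z
      rw [hz] at this
      exact hf (by simpa using this)
    rw [← h.pair_right _ _ hgy, hncard, Finset.filter_filter]
    congr 1
    ext a
    have : g • ε.symm a = ε.symm (f + a) := by
      rw [Equiv.eq_symm_apply, hg, Equiv.apply_symm_apply, add_comm]
    have h3 := h.inv_iff g (ε.symm a) (g⁻¹ • y)
    rw [smul_inv_smul, this] at h3
    simp [h3]

/-- A point-primitive flag-transitive group with abelian point stabilizers is a Frobenius group of
odd order and degree `p ^ d`, acting by affine maps of a finite field. The order is odd because it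
is the product of `k` and the number of points, both of which are odd. -/
theorem primitive_case [Finite G] [Finite X] [Finite Y] (h : FlagAction G X Y I k lam)
    (hprim : MulAction.IsPreprimitive G X) {K : Type*} [CommGroup K] (x : X)
    (e : MulAction.stabilizer G x ≃* K)
    (hcomm : ∀ (x : X) (a b : G), a • x = x → b • x = x → a * b = b * a)
    (hfree : ∀ (g : G) x y, I x y → g • x = x → g • y = y → g = 1) :
    IsCyclic K ∧ Odd (Nat.card G) ∧ (∃ g : G, g ≠ 1 ∧ ∃ y : X, g • y = y) ∧
      (∀ g : G, g ≠ 1 → ∀ y z : X, g • y = y → g • z = z → y = z) ∧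
      ∃ (p d : ℕ) (F : Type) (_ : Field F) (_ : Fintype F), p.Prime ∧ Odd p ∧
        Nat.card X = p ^ d ∧ Fintype.card F = Nat.card X ∧
        ∃ ε : X ≃ F, ∀ g : G, ∃ a b : F, a ≠ 0 ∧ ∀ z, ε (g • z) = a * ε z + b := by
  have hkv := h.k_lt
  have hk2 := h.two_lt
  have : Nontrivial X := (Finite.one_lt_card_iff_nontrivial).1 (by omega)
  have hfrob : ∀ g : G, g ≠ 1 → ∀ y z : X, g • y = y → g • z = z → y = z := by
    intro g hg y z hy hz
    by_contra hyz
    exact hg (eq_one_of_fix_two h.faith_left hcomm hyz hy hz)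
  have hcard := h.card_stabilizer hfree x
  have hA1 : MulAction.stabilizer G x ≠ ⊥ := by
    intro hbot
    rw [hbot, Subgroup.card_bot] at hcard
    omega
  have hk := h.odd_valency hfree hfrob x (hcomm x)
  obtain ⟨hcyc, F, hF, hFt, ε, hε, htr⟩ := exists_field_of_frobenius x e hA1 hfrob
  obtain ⟨y, hy, -, -⟩ := h.exists_stabilizer_eq hfree x (hcomm x)
  have hodd := h.odd_card_field hk ε htr y fun g hg => ⟨x, by
    have : g ∈ MulAction.stabilizer G y := hg
    rw [hy] at this
    exact this⟩
  have hXF : Fintype.card F = Nat.card X := by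
    rw [Nat.card_congr ε, Nat.card_eq_fintype_card]
  obtain ⟨p, hchar, n, hp, hpn⟩ := FiniteField.card' F
  refine ⟨hcyc, ?_, ?_, hfrob, p, n, F, hF, hFt, hp, ?_, ?_, hXF, ε, hε⟩
  · rw [← Subgroup.card_mul_index (MulAction.stabilizer G x), hcard,
      MulAction.index_stabilizer_of_transitive, ← hXF]
    exact hk.mul hodd
  · obtain ⟨⟨a, ha⟩, ha1⟩ := Subgroup.ne_bot_iff_exists_ne_one.1 hA1
    exact ⟨a, by simpa using ha1, x, ha⟩
  · rw [hpn] at hodd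
    exact Nat.Odd.of_mul_left (n := p ^ ((n : ℕ) - 1)) (by
      rwa [← pow_succ', Nat.sub_add_cancel n.pos])
  · rw [← hXF, hpn]

end FlagAction

/-! ### Stabilizers of points and blocks, and the groups they induce -/

namespace FlagAction

variable {G X Y : Type*} [Group G] [MulAction G X] [MulAction G Y]
    {I : X → Y → Prop} {k lam : ℕ}

/-- It suffices to check the hypothesis of `free_of_comm` at one point. -/
theorem free_of_comm_at [Finite X] [Finite Y] (h : FlagAction G X Y I k lam) (x : X)
    (hc : ∀ a b : G, a • x = x → b • x = x → ∀ y, I x y → (a * b) • y = (b * a) • y)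
    (g : G) (x' : X) (y : Y) (hI : I x' y) (hx : g • x' = x') (hy : g • y = y) : g = 1 := by
  refine h.free_of_comm ?_ hI hx hy
  intro x' a b ha hb y hxy
  obtain ⟨t, rfl⟩ := h.transitive x x'
  have h1 := hc (t⁻¹ * a * t) (t⁻¹ * b * t) (by simp [mul_smul, ha]) (by simp [mul_smul, hb])
    (t⁻¹ • y) (by rw [← h.inv_iff t, smul_inv_smul]; exact hxy)
  simpa [mul_smul] using h1

theorem comm_of_equiv (h : FlagAction G X Y I k lam) {K : Type*} [CommGroup K] {x : X}
    (e : MulAction.stabilizer G x ≃* K) (x' : X) (a b : G) (ha : a • x' = x') (hb : b • x' = x') :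
    a * b = b * a := by
  obtain ⟨t, rfl⟩ := h.transitive x x'
  have h1 : (⟨t⁻¹ * a * t, by simp [mul_smul, ha]⟩ : MulAction.stabilizer G x) *
      ⟨t⁻¹ * b * t, by simp [mul_smul, hb]⟩ =
      ⟨t⁻¹ * b * t, by simp [mul_smul, hb]⟩ * ⟨t⁻¹ * a * t, by simp [mul_smul, ha]⟩ :=
    e.injective (by rw [map_mul, map_mul, mul_comm])
  have h2 := congrArg Subtype.val h1
  refine mul_right_cancel (b := t) ?_
  simpa [mul_assoc] using h2

theorem free_of_equiv [Finite X] [Finite Y] (h : FlagAction G X Y I k lam) {K : Type*}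
    [CommGroup K] {x : X} (e : MulAction.stabilizer G x ≃* K) :
    ∀ (g : G) x y, I x y → g • x = x → g • y = y → g = 1 :=
  h.free_of_comm_at x fun a b ha hb y _ => by rw [h.comm_of_equiv e x a b ha hb]

/-- The stabilizer `H` of `x` is isomorphic to the abelian group `K` if and only if the
group it induces on the blocks through `x`, here parametrized by `j`, is. -/
theorem induced_iff [Finite X] [Finite Y] (h : FlagAction G X Y I k lam) (K : Type*)
    [CommGroup K] (x : X) (H : Subgroup G) (hH : H = MulAction.stabilizer G x) {D : Type*}
    (φ : H →* Equiv.Perm D) (j : D → Y) (hj : ∀ y, I x y ↔ ∃ d, j d = y)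
    (hφ : ∀ (a : H) d, j (φ a d) = (a : G) • j d) :
    Nonempty (H ≃* K) ↔ Nonempty (φ.range ≃* K) := by
  subst hH
  have hinj : (∀ (g : G) x y, I x y → g • x = x → g • y = y → g = 1) →
      Function.Injective φ := by
    intro hfree
    rw [injective_iff_map_eq_one]
    intro a ha
    obtain ⟨y, hy⟩ := h.exists_right x
    obtain ⟨d, rfl⟩ := (hj y).1 hy
    refine Subtype.ext (hfree a x _ hy a.2 ?_)
    rw [← hφ, ha, Equiv.Perm.one_apply]
  constructor
  · rintro ⟨e⟩
    exact ⟨(MonoidHom.ofInjective (hinj (h.free_of_equiv e))).symm.trans e⟩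
  · rintro ⟨e⟩
    have hfree := h.free_of_comm_at x (by
      intro a b ha hb y hy
      obtain ⟨d, rfl⟩ := (hj y).1 hy
      have h1 : φ.rangeRestrict (⟨a, ha⟩ * ⟨b, hb⟩) = φ.rangeRestrict (⟨b, hb⟩ * ⟨a, ha⟩) :=
        e.injective (by simp only [map_mul, mul_comm])
      have h2 : φ (⟨a, ha⟩ * ⟨b, hb⟩) = φ (⟨b, hb⟩ * ⟨a, ha⟩) := congrArg Subtype.val h1
      have h3 := hφ (⟨a, ha⟩ * ⟨b, hb⟩) d
      rw [h2, hφ] at h3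
      exact h3.symm)
    exact ⟨(MonoidHom.ofInjective (hinj hfree)).trans e⟩

/-- If point stabilizers are abelian, then point and block stabilizers are conjugate. -/
theorem stabilizer_conj [Finite G] [Finite X] [Finite Y] (h : FlagAction G X Y I k lam)
    {K : Type*} [CommGroup K] {x : X} (e : MulAction.stabilizer G x ≃* K) (y : Y) :
    ∃ g : G, MulAction.stabilizer G y =
      (MulAction.stabilizer G x).map (MulAut.conj g).toMonoidHom := by
  obtain ⟨y', hy', -, -⟩ := h.exists_stabilizer_eq (h.free_of_equiv e) x (h.comm_of_equiv e x)
  obtain ⟨g, rfl⟩ := h.dual.transitive y' y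
  refine ⟨g, ?_⟩
  rw [← hy', MulAction.stabilizer_smul_eq_stabilizer_map_conj]

theorem equiv_block [Finite G] [Finite X] [Finite Y] (h : FlagAction G X Y I k lam)
    {K : Type*} [CommGroup K] {x : X} (e : MulAction.stabilizer G x ≃* K) (y : Y) :
    Nonempty (MulAction.stabilizer G y ≃* K) := by
  obtain ⟨g, hg⟩ := h.stabilizer_conj e y
  rw [hg]
  exact ⟨((MulAction.stabilizer G x).equivMapOfInjective _ (MulAut.conj g).injective).symm.trans e⟩

theorem equiv_point (h : FlagAction G X Y I k lam)
    {K : Type*} [CommGroup K] {x : X} (e : MulAction.stabilizer G x ≃* K) (x' : X) :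
    Nonempty (MulAction.stabilizer G x' ≃* K) := by
  obtain ⟨g, rfl⟩ := h.transitive x x'
  rw [MulAction.stabilizer_smul_eq_stabilizer_map_conj]
  exact ⟨((MulAction.stabilizer G x).equivMapOfInjective _ (MulAut.conj g).injective).symm.trans e⟩

/-- If point stabilizers are abelian and `G` is primitive on blocks, then `G` is primitive on
points, since point stabilizers are block stabilizers. -/
theorem isPreprimitive_of_blocks [Finite G] [Finite X] [Finite Y]
    (h : FlagAction G X Y I k lam) {K : Type*} [CommGroup K] {x : X}
    (e : MulAction.stabilizer G x ≃* K) (hprim : MulAction.IsPreprimitive G Y) :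
    MulAction.IsPreprimitive G X := by
  have hk := h.k_lt
  have : Nontrivial X := (Finite.one_lt_card_iff_nontrivial).1 (by omega)
  have : Nontrivial Y := (Finite.one_lt_card_iff_nontrivial).1 (by rw [← h.card_eq]; omega)
  have := h.isPretransitive
  obtain ⟨y, hy, -, -⟩ := h.exists_stabilizer_eq (h.free_of_equiv e) x (h.comm_of_equiv e x)
  have h1 := MulAction.IsPreprimitive.isCoatom_stabilizer_of_isPreprimitive (G := G) y
  rw [hy] at h1
  exact (MulAction.isCoatom_stabilizer_iff_preprimitive G x).1 h1

end FlagAction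

theorem isPreprimitive_of_isPrimitiveAction {G X : Type*} [Group G] [MulAction G X]
    (h : IsPrimitiveAction G X) : MulAction.IsPreprimitive G X :=
  have := h.1
  { isTrivialBlock_of_isBlock := fun {B} hB => h.2 B hB }

theorem exists_permHom {H α : Type*} [Group H] [MulAction H α] (s : Finset α)
    (hs : ∀ h : H, ∀ a ∈ s, h • a ∈ s) :
    ∃ φ : H →* Equiv.Perm s, ∀ h a, (φ h a : α) = h • (a : α) := by
  let _ : MulAction H s :=
    { smul := fun h a => ⟨h • (a : α), hs h a a.2⟩
      one_smul := fun a => Subtype.ext (one_smul H (a : α))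
      mul_smul := fun g h a => Subtype.ext (mul_smul g h (a : α)) }
  exact ⟨MulAction.toPermHom H s, fun _ _ => rfl⟩

/-- If the permutation group induced by `G` is primitive, so is the action of `G`, as blocks of
imprimitivity for `G` are blocks for the induced group. -/
theorem isPrimitiveAction_of_range {G X : Type*} [Group G] [MulAction G X]
    (ψ : G →* Equiv.Perm X) (hψ : ∀ g x, ψ g x = g • x) (h : IsPrimitiveAction ψ.range X) :
    IsPrimitiveAction G X := by
  have hset : ∀ (g : G) (B : Set X), (⟨ψ g, g, rfl⟩ : ψ.range) • B = g • B := by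
    intro g B
    exact Set.image_congr fun z _ => hψ g z
  refine ⟨⟨fun x y => ?_⟩, fun B hB => h.2 B ?_⟩
  · obtain ⟨⟨_, g, rfl⟩, hg⟩ := h.1.exists_smul_eq x y
    exact ⟨g, (hψ g x).symm.trans hg⟩
  · rintro ⟨_, g, rfl⟩ ⟨_, g', rfl⟩ hne
    rw [hset, hset] at hne ⊢
    exact hB hne

/-- **Theorem 1.1 (abelian case).** For a symmetric design with `λ > 1` and a
flag-transitive automorphism group `G` and a finite abelian group `K`, the conditions
(a) `G_x ≅ K`, (b) `G_B ≅ K`, (c) `G_x^{D(x)} ≅ K`, (d) `G_B^B ≅ K`, and (e) the block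
set is generated by a faithful suborbit of a point stabilizer isomorphic to `K`, are all
equivalent; and if they hold, then `G_x` and `G_B` are conjugate in `G`, and either `G`
is imprimitive on points and blocks, or `K` is cyclic and `G` is a Frobenius group of odd
order with `G ≤ AΓL₁(v)`. -/
theorem stmt_1 (𝓑 : Finset (Finset P)) (v k lam : ℕ)
    (hD : IsDesign 𝓑 v k lam) (hsym : 𝓑.card = v) (hlam : 1 < lam)
    (G : Subgroup (Equiv.Perm P)) (hAut : IsAutGroup G 𝓑)
    (hflag : IsFlagTransitive G 𝓑)
    (K : Type*) [CommGroup K] [Fintype K]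
    (x : P) (B : Finset P) (hB : B ∈ 𝓑) :
    List.TFAE [
      -- (a) G_x ≅ K
      Nonempty (MulAction.stabilizer G x ≃* K),
      -- (b) G_B ≅ K
      Nonempty (MulAction.stabilizer G B ≃* K),
      -- (c) the permutation group induced by G_x on the set D(x) of blocks
      -- through x is isomorphic to K
      ∃ φ : MulAction.stabilizer G x →* Equiv.Perm (𝓑.filter fun C => x ∈ C),
        (∀ (h : MulAction.stabilizer G x) (C : (𝓑.filter fun C => x ∈ C)),
          (φ h C : Finset P) = h • (C : Finset P)) ∧
        Nonempty (φ.range ≃* K),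
      -- (d) the permutation group induced by G_B on B is isomorphic to K
      ∃ φ : MulAction.stabilizer G B →* Equiv.Perm B,
        (∀ (h : MulAction.stabilizer G B) (a : B), (φ h a : P) = h • (a : P)) ∧
        Nonempty (φ.range ≃* K),
      -- (e) the block set is generated by a faithful suborbit
      ∃ (y : P) (Δ : Finset P),
        (∃ z : P, (Δ : Set P) = MulAction.orbit (MulAction.stabilizer G y) z) ∧
        (∀ g ∈ MulAction.stabilizer G y, (∀ a ∈ Δ, g • a = a) → g = 1) ∧
        (𝓑 : Set (Finset P)) = Set.range (fun g : G => g • Δ) ∧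
        Nonempty (MulAction.stabilizer G y ≃* K)] ∧
    (Nonempty (MulAction.stabilizer G x ≃* K) →
      -- G_x and G_B are conjugate in G
      (∃ g : G, MulAction.stabilizer G B =
          (MulAction.stabilizer G x).map (MulAut.conj g).toMonoidHom) ∧
      -- either G is imprimitive on both points and blocks ...
      (((MulAction.IsPretransitive G P ∧ ¬ IsPrimitiveAction G P) ∧
        (∃ ψ : G →* Equiv.Perm 𝓑,
          (∀ (g : G) (C : 𝓑), (ψ g C : Finset P) = g • (C : Finset P)) ∧
          MulAction.IsPretransitive ψ.range 𝓑 ∧ ¬ IsPrimitiveAction ψ.range 𝓑)) ∨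
      -- ... or K is cyclic, G is a Frobenius group of odd order with G ≤ AΓL₁(v)
        (IsCyclic K ∧ Odd (Nat.card G) ∧
          (MulAction.IsPretransitive G P ∧
            (∃ g : G, g ≠ 1 ∧ ∃ y : P, g • y = y) ∧
            (∀ g : G, g ≠ 1 → ∀ y z : P, g • y = y → g • z = z → y = z)) ∧
          (∃ (p d : ℕ) (F : Type) (hf : Field F) (hft : Fintype F),
            p.Prime ∧ Odd p ∧ v = p ^ d ∧ @Fintype.card F hft = v ∧
            @ActsSemilinearlyOn P G F hf)))) := by
  classical
  let _ : MulAction G 𝓑 := blockAction hAut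
  have h : FlagAction G P 𝓑 (fun x C => x ∈ (C : Finset P)) k lam :=
    isFlagAction hD hsym hAut hflag
  have hsmul : ∀ (g : G) (C : 𝓑), ((g • C : 𝓑) : Finset P) = g • (C : Finset P) :=
    fun _ _ => rfl
  have hstab : MulAction.stabilizer G B = MulAction.stabilizer G (⟨B, hB⟩ : 𝓑) := by
    ext g
    exact (Subtype.ext_iff (a1 := g • (⟨B, hB⟩ : 𝓑)) (a2 := ⟨B, hB⟩)).symm
  obtain ⟨φ₀, hφ₀⟩ := exists_permHom (H := MulAction.stabilizer G x)
    (𝓑.filter fun C => x ∈ C) (by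
      intro a C hC
      rw [Finset.mem_filter] at hC ⊢
      refine ⟨hAut (a : G) (a : G).2 C hC.1, ?_⟩
      have h1 := Finset.smul_mem_smul_finset (a := (a : G)) hC.2
      rwa [show (a : G) • x = x from a.2] at h1)
  obtain ⟨φ₁, hφ₁⟩ := exists_permHom (H := MulAction.stabilizer G B) B (by
    intro a z hz
    have h1 := Finset.smul_mem_smul_finset (a := (a : G)) hz
    rwa [show (a : G) • B = B from a.2] at h1)
  have hc : ∀ φ : MulAction.stabilizer G x →* Equiv.Perm (𝓑.filter fun C => x ∈ C),
      (∀ (h : MulAction.stabilizer G x) (C : (𝓑.filter fun C => x ∈ C)),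
        (φ h C : Finset P) = h • (C : Finset P)) →
      (Nonempty (MulAction.stabilizer G x ≃* K) ↔ Nonempty (φ.range ≃* K)) := by
    intro φ hφ
    refine h.induced_iff K x _ rfl φ
      (fun C => ⟨C, (Finset.mem_filter.1 C.2).1⟩) ?_ ?_
    · intro C
      exact ⟨fun hC => ⟨⟨C, Finset.mem_filter.2 ⟨C.2, hC⟩⟩, rfl⟩,
        fun ⟨C', hC'⟩ => hC' ▸ (Finset.mem_filter.1 C'.2).2⟩
    · intro a C
      exact Subtype.ext (hφ a C)
  have hd : ∀ φ : MulAction.stabilizer G B →* Equiv.Perm B,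
      (∀ (h : MulAction.stabilizer G B) (a : B), (φ h a : P) = h • (a : P)) →
      (Nonempty (MulAction.stabilizer G B ≃* K) ↔ Nonempty (φ.range ≃* K)) := by
    intro φ hφ
    refine h.dual.induced_iff K ⟨B, hB⟩ _ hstab φ (fun z => (z : P)) ?_ ?_
    · intro z
      exact ⟨fun hz => ⟨⟨z, hz⟩, rfl⟩, fun ⟨w, hw⟩ => hw ▸ w.2⟩
    · intro a z
      exact hφ a z
  refine ⟨?_, ?_⟩
  · tfae_have 1 ↔ 2 := by
      rw [hstab]
      exact ⟨fun ⟨e⟩ => h.equiv_block e ⟨B, hB⟩, fun ⟨e⟩ => h.dual.equiv_block e x⟩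
    tfae_have 1 ↔ 3 :=
      ⟨fun h1 => ⟨φ₀, hφ₀, (hc φ₀ hφ₀).1 h1⟩, fun ⟨φ, hφ, h1⟩ => (hc φ hφ).2 h1⟩
    tfae_have 2 ↔ 4 :=
      ⟨fun h1 => ⟨φ₁, hφ₁, (hd φ₁ hφ₁).1 h1⟩, fun ⟨φ, hφ, h1⟩ => (hd φ hφ).2 h1⟩
    tfae_have 1 → 5 := by
      rintro ⟨e⟩
      obtain ⟨C, hC, hxC, horb⟩ :=
        h.exists_stabilizer_eq (h.free_of_equiv e) x (h.comm_of_equiv e x)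
      obtain ⟨z, hz⟩ := h.dual.exists_right C
      refine ⟨x, C, ⟨z, horb z hz⟩, ?_, ?_, ⟨e⟩⟩
      · intro g hg hfix
        refine h.free_of_equiv e g z C hz (hfix z hz) ?_
        rw [← hC] at hg
        exact hg
      · ext C'
        constructor
        · intro hC'
          obtain ⟨g, hg⟩ := h.dual.transitive C ⟨C', hC'⟩
          exact ⟨g, congrArg Subtype.val hg⟩
        · rintro ⟨g, rfl⟩
          exact hAut g g.2 C C.2
    tfae_have 5 → 1 := by
      rintro ⟨y, -, -, -, -, ⟨e⟩⟩
      exact h.equiv_point e x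
    tfae_finish
  · rintro ⟨e⟩
    refine ⟨?_, ?_⟩
    · rw [hstab]
      exact h.stabilizer_conj e ⟨B, hB⟩
    have hGP := h.isPretransitive
    by_cases hprim : MulAction.IsPreprimitive G P
    · right
      obtain ⟨hcyc, hodd, hne, hfrob, p, d, F, hF, hFt, hp, hpodd, hcard, hFcard, ε, hε⟩ :=
        h.primitive_case hprim x e (h.comm_of_equiv e) (h.free_of_equiv e)
      have hv : Nat.card P = v := by rw [Nat.card_eq_fintype_card, hD.card_points]
      refine ⟨hcyc, hodd, ⟨hGP, hne, hfrob⟩, p, d, F, hF, hFt, hp, hpodd, hv ▸ hcard,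
        hFcard.trans hv, ε, fun g => ?_⟩
      obtain ⟨a, b, ha, hab⟩ := hε g
      exact ⟨a, b, RingEquiv.refl F, ha, hab⟩
    · left
      refine ⟨⟨hGP, fun hcon => hprim (isPreprimitive_of_isPrimitiveAction hcon)⟩, ?_⟩
      have hψ : ∀ (g : G) (C : 𝓑),
          (MulAction.toPermHom G 𝓑 g C : Finset P) = g • (C : Finset P) := hsmul
      refine ⟨MulAction.toPermHom G 𝓑, hψ, ⟨fun C C' => ?_⟩, fun hcon => hprim ?_⟩
      · obtain ⟨g, hg⟩ := h.dual.transitive C C'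
        exact ⟨⟨_, g, rfl⟩, hg⟩
      · exact h.isPreprimitive_of_blocks e (isPreprimitive_of_isPrimitiveAction
          (isPrimitiveAction_of_range (MulAction.toPermHom G 𝓑) (fun _ _ => rfl) hcon))
end

section
/- Let G be a finite primitive permutation group on a set Ω whose point stabilizers are isomorphic to a dihedral group D_{2n} for some n ≥ 3. Then either G has an elementary abelian regular normal subgroup (G is of affine type), or G has a normal subgroup T that is a non-abelian simple group with trivial centralizer C_G(T) = 1 (G is of almost simple type). -/
/-!
Let `H` be a point stabilizer, a core-free maximal subgroup of `G` isomorphic to a dihedral group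
and in particular solvable, and let `N` be a minimal normal subgroup of `G`, so that `G = N H`.

If `N` is solvable, it is elementary abelian (`comm_of_minimal_of_isSolvable`,
`exists_orderOf_eq_of_minimal`), and a faithful transitive abelian group is regular: this is the
affine case.

Otherwise `C_G(N) = 1` (`centralizer_eq_bot_of_minimal`): if `Z = C_G(N) ≠ 1`, then `G = Z H`, so
`G / Z` is solvable, while `N` embeds in it because `N ∩ Z = 1`. It remains to see that `N` is
simple (`simple_of_coatom_dihedral`). Put `L = N ∩ H`. Maximality of `H` says that an `H`-invariant
subgroup of `N` containing `L` is `L` or `N`.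

* `L ≠ 1` (`isSolvable_of_regular`). Suppose `L = 1`, and let `P` be a normal subgroup of `H` of
  prime order `p`. Then `C_N(P)` is `H`-invariant, hence trivial, so `p ∤ |N|`. Counting fixed
  points shows that for each prime `q` there is exactly one `P`-invariant Sylow `q`-subgroup of `N`
  (`exists_sylow_fixed`). It is `H`-invariant, hence equal to `N` if `q` divides `|N|`, and `N` is
  solvable.
* Let `T` be minimal among the non-trivial subgroups normalized by `N` inside `N`, and
  `C = C_G(T)`. Then `N ≤ T C`, `T ∩ C = 1`, and `T` is non-abelian simple; the conjugates of `T`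
  other than `T` lie in `C`. Suppose `T ≠ N`. The intersection of `N` with the `H`-conjugates of
  `C L` is `H`-invariant, contains `L`, and is not `N` because `L` is solvable; so it is `L`. This
  gives that the projection of `L` to `T` is `T ∩ L`, which is non-trivial because `C_G(N) = 1`.
  Since some `h ∈ H` moves `T`, the subgroup `T ∩ L` of the dihedral group `H` meets a conjugate of
  itself trivially, so it is `{1, s}` for an involution `s` (`dihedral_eq_of_disjoint_conj`).
  As `H = N_G(L)`, this yields `C_T(s) = {1, s}`, hence a Sylow `2`-subgroup of `T` of order `2`,
  which is impossible in a non-abelian simple group (`comm_of_simple_of_involution`).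
-/

/-- If `B` normalizes `A`, every element of `A ⊔ B` is a product `a * b`. -/
theorem exists_mul_of_mem_sup {G : Type*} [Group G] {A B : Subgroup G}
    (h : ∀ b ∈ B, ∀ a ∈ A, b * a * b⁻¹ ∈ A) {x : G} (hx : x ∈ A ⊔ B) :
    ∃ a ∈ A, ∃ b ∈ B, x = a * b := by
  let S : Subgroup G :=
    { carrier := {x | ∃ a ∈ A, ∃ b ∈ B, x = a * b}
      one_mem' := ⟨1, A.one_mem, 1, B.one_mem, by simp⟩
      mul_mem' := by
        rintro _ _ ⟨a, ha, b, hb, rfl⟩ ⟨a', ha', b', hb', rfl⟩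
        exact ⟨a * (b * a' * b⁻¹), A.mul_mem ha (h b hb a' ha'), b * b', B.mul_mem hb hb',
          by group⟩
      inv_mem' := by
        rintro _ ⟨a, ha, b, hb, rfl⟩
        exact ⟨b⁻¹ * a⁻¹ * b⁻¹⁻¹, h _ (B.inv_mem hb) _ (A.inv_mem ha), b⁻¹, B.inv_mem hb,
          by group⟩ }
  have hS : A ⊔ B ≤ S :=
    sup_le (fun a ha => ⟨a, ha, 1, B.one_mem, by simp⟩) (fun b hb => ⟨1, A.one_mem, b, hb, by simp⟩)
  exact hS hx

/-! ### Fixed Sylow subgroups under coprime action -/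

/-- If a normal `p`-subgroup `P` of `A` fixes no non-trivial element of `N`, then `N` has an
`A`-invariant Sylow `q`-subgroup for every prime `q`: it has exactly one `P`-invariant one, and `A`
permutes the `P`-invariant ones. -/
theorem exists_sylow_fixed {A N : Type*} [Group A] [Finite A] [Group N] [Finite N]
    [MulDistribMulAction A N] (P : Subgroup A) [P.Normal] {p : ℕ} [Fact p.Prime]
    (hP : IsPGroup p P) (hfix : ∀ x : N, (∀ g ∈ P, g • x = x) → x = 1)
    (q : ℕ) [Fact q.Prime] : ∃ S : Sylow q N, ∀ a : A, a • S = S := by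
  have hcard : ¬ p ∣ Nat.card N := by
    have h1 := hP.card_modEq_card_fixedPoints N
    have h2 : MulAction.fixedPoints P N = {1} := by
      ext x
      simp only [MulAction.mem_fixedPoints, Set.mem_singleton_iff]
      refine ⟨fun h => hfix x fun g hg => h ⟨g, hg⟩, ?_⟩
      rintro rfl g
      exact smul_one (g : A)
    rw [h2, show Nat.card ({1} : Set N) = 1 from Nat.card_unique] at h1
    intro h
    have h3 := ((Nat.modEq_zero_iff_dvd.2 h).symm.trans h1)
    have := (Nat.modEq_zero_iff_dvd.1 h3.symm)
    exact (Fact.out : p.Prime).one_lt.ne' (Nat.dvd_one.1 this)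
  obtain ⟨S, hS⟩ := hP.nonempty_fixed_point_of_prime_not_dvd_card (Sylow q N) (by
    obtain ⟨S⟩ := (inferInstance : Nonempty (Sylow q N))
    exact fun h => hcard ((h.trans S.card_dvd_index).trans (Subgroup.index_dvd_card _)))
  have hsm : ∀ (a : A) (t : N) (U : Sylow q N), a • (t • U) = (a • t) • (a • U) := by
    intro a t U
    apply Sylow.ext
    ext x
    simp only [Sylow.smul_def, Sylow.pointwise_smul_def]
    simp [Subgroup.mem_pointwise_smul_iff_inv_smul_mem]
  -- two `P`-invariant Sylow subgroups coincide: `P` acts on the set of elements conjugating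
  -- one to the other, whose size is prime to `p`
  have huniq : ∀ U V : Sylow q N, (∀ g ∈ P, g • U = U) → (∀ g ∈ P, g • V = V) → U = V := by
    intro U V hU hV
    let X : SubMulAction P N :=
      { carrier := {t | t • U = V}
        smul_mem' := by
          rintro ⟨g, hg⟩ t (ht : t • U = V)
          change (g • t) • U = V
          calc (g • t) • U = (g • t) • (g • U) := by rw [hU g hg]
            _ = g • (t • U) := (hsm _ _ _).symm
            _ = V := by rw [ht, hV g hg] }
    obtain ⟨t₀, ht₀⟩ := MulAction.exists_smul_eq N U V
    have hX : Nat.card X = Nat.card (MulAction.stabilizer N U) := by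
      refine Nat.card_congr
        { toFun := fun t => ⟨t₀⁻¹ * t.1, ?_⟩
          invFun := fun s => ⟨t₀ * s.1, ?_⟩
          left_inv := fun t => by simp
          right_inv := fun s => by simp }
      · rw [MulAction.mem_stabilizer_iff, mul_smul, show t.1 • U = V from t.2, ← ht₀,
          inv_smul_smul]
      · change (t₀ * s.1) • U = V
        rw [mul_smul, MulAction.mem_stabilizer_iff.1 s.2, ht₀]
    obtain ⟨t, ht⟩ := hP.nonempty_fixed_point_of_prime_not_dvd_card X (by
      rw [hX]
      exact fun h => hcard (h.trans (Subgroup.card_subgroup_dvd_card _)))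
    have ht1 : (t : N) = 1 := hfix _ fun g hg => congrArg Subtype.val (ht ⟨g, hg⟩)
    have := t.2
    rw [ht1] at this
    exact (one_smul N U).symm.trans this
  refine ⟨S, fun a => huniq _ _ (fun g hg => ?_) (fun g hg => hS ⟨g, hg⟩)⟩
  have h1 : (a⁻¹ * g * a) • S = S :=
    hS ⟨_, by simpa using (inferInstance : P.Normal).conj_mem g hg a⁻¹⟩
  calc g • a • S = a • (a⁻¹ * g * a) • S := by simp [← mul_smul, mul_assoc]
    _ = a • S := by rw [h1]

/-! ### Involutions with small centralizer -/

/-- A finite simple group with an involution `s` satisfying `C(s) = {1, s}` is abelian: a Sylow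
`2`-subgroup containing `s` has a central involution, which must be `s`, so it has order `2` and
Burnside's transfer theorem gives it a normal complement. -/
theorem comm_of_simple_of_involution {T : Type*} [Group T] [Finite T] [IsSimpleGroup T] {s : T}
    (hs : s ≠ 1) (hss : s * s = 1) (hc : ∀ t : T, t * s = s * t → t = 1 ∨ t = s) :
    ∀ a b : T, a * b = b * a := by
  have : Fact (Nat.Prime 2) := ⟨Nat.prime_two⟩
  have hos : orderOf s = 2 := orderOf_eq_prime (by rw [pow_two, hss]) hs
  have hz : IsPGroup 2 (Subgroup.zpowers s) :=
    IsPGroup.of_card (n := 1) (by rw [Nat.card_zpowers, hos, pow_one])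
  obtain ⟨Q, hQ⟩ := hz.exists_le_sylow
  have hsQ : s ∈ Q := hQ (Subgroup.mem_zpowers s)
  have : Nontrivial Q := ⟨⟨⟨s, hsQ⟩, 1, fun h => hs (congrArg Subtype.val h)⟩⟩
  have := Q.2.center_nontrivial
  obtain ⟨⟨⟨z, hzQ⟩, hzc⟩, hz1⟩ := exists_ne (1 : Subgroup.center Q)
  have hzc' : ∀ y ∈ Q, y * z = z * y := fun y hy =>
    congrArg Subtype.val (Subgroup.mem_center_iff.1 hzc ⟨y, hy⟩)
  have hzs : z = s := by
    refine (hc z (hzc' s hsQ).symm).resolve_left fun h => hz1 ?_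
    subst h; rfl
  subst hzs
  have hQ2 : ∀ y ∈ Q, y = 1 ∨ y = z := fun y hy => hc y (hzc' y hy)
  have hQz : (Q : Subgroup T) = Subgroup.zpowers z := by
    refine le_antisymm (fun y hy => ?_) hQ
    rcases hQ2 y hy with rfl | rfl
    · exact one_mem _
    · exact Subgroup.mem_zpowers _
  have hcyc : IsCyclic Q := by
    rw [hQz]; infer_instance
  have h2 : (Nat.card T).minFac = 2 := by
    rw [Nat.minFac_eq_two_iff, ← hos]
    exact orderOf_dvd_natCard z
  have hcompl := IsCyclic.isComplement' h2 hcyc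
  -- the normal complement is trivial or everything
  rcases (MonoidHom.normal_ker (MonoidHom.transferSylow Q
    (hcyc.normalizer_le_centralizer h2))).eq_bot_or_eq_top with h | h
  · rw [h] at hcompl
    have htop : (Q : Subgroup T) = ⊤ := Subgroup.isComplement'_bot_left.1 hcompl
    intro a b
    have ha := hQ2 a (show a ∈ (Q : Subgroup T) by rw [htop]; trivial)
    have hb := hQ2 b (show b ∈ (Q : Subgroup T) by rw [htop]; trivial)
    rcases ha with rfl | rfl <;> rcases hb with rfl | rfl <;> simp
  · rw [h] at hcompl
    have hbot : (Q : Subgroup T) = ⊥ := Subgroup.isComplement'_top_left.1 hcompl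
    exact absurd (Subgroup.mem_bot.1 (hbot ▸ hsQ : z ∈ (⊥ : Subgroup T))) hs

/-! ### Dihedral groups -/

theorem dihedral_isSolvable (n : ℕ) : Group.IsSolvable (DihedralGroup n) := by
  let ρ : Multiplicative (ZMod n) →* DihedralGroup n :=
    { toFun := fun i => .r i.toAdd
      map_one' := rfl
      map_mul' := fun i j => by simp }
  let σ : DihedralGroup n →* Multiplicative (ZMod 2) :=
    { toFun := fun x => match x with
        | .r _ => 1
        | .sr _ => Multiplicative.ofAdd 1
      map_one' := rfl
      map_mul' := by
        rintro (i | i) (j | j) <;> simp <;> decide }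
  refine Group.isSolvable_of_ker_le_range ρ σ ?_
  rintro (i | i) hx
  · exact ⟨Multiplicative.ofAdd i, rfl⟩
  · exact absurd (show Multiplicative.ofAdd (1 : ZMod 2) = 1 from hx) (by decide)

/-- The witness `z` is the rotation `r ^ (n / p)`, where `p` is the least prime factor of `n`. -/
theorem dihedral_exists_normal_prime {n : ℕ} (hn : 3 ≤ n) : ∃ (p : ℕ) (_ : p.Prime)
    (z : DihedralGroup n), orderOf z = p ∧ (Subgroup.zpowers z).Normal := by
  have hp : n.minFac.Prime := Nat.minFac_prime (by omega)
  have hdvd := n.minFac_dvd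
  obtain ⟨m, hm⟩ := hdvd
  have hm0 : m ≠ 0 := by rintro rfl; omega
  refine ⟨n.minFac, hp, DihedralGroup.r 1 ^ m, ?_, ⟨?_⟩⟩
  · have : m ∣ n := ⟨n.minFac, by rw [mul_comm]; exact hm⟩
    rw [orderOf_pow_of_dvd hm0 (by rwa [DihedralGroup.orderOf_r_one]),
      DihedralGroup.orderOf_r_one]
    conv_lhs => rw [hm]
    exact Nat.mul_div_cancel _ (by omega)
  · rintro x ⟨k, rfl⟩ (i | i)
    · refine ⟨k, ?_⟩
      simp [DihedralGroup.r_zpow]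
    · refine ⟨-k, ?_⟩
      simp [DihedralGroup.r_zpow]

/-- A subgroup of a dihedral group meeting some conjugate of itself trivially contains no
non-trivial rotation (subgroups of the rotation group are normal), so has order at most `2`. -/
theorem dihedral_eq_of_disjoint_conj {n : ℕ} (R : Subgroup (DihedralGroup n))
    (g : DihedralGroup n) (h : ∀ a ∈ R, g * a * g⁻¹ ∈ R → a = 1) :
    ∀ a ∈ R, ∀ b ∈ R, a ≠ 1 → b ≠ 1 → a = b := by
  have hrot : ∀ i : ZMod n, DihedralGroup.r i ∈ R → DihedralGroup.r i = 1 := by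
    intro i hi
    refine h _ hi ?_
    rcases g with j | j
    · simpa using hi
    · simpa using R.inv_mem hi
  rintro (i | i) ha (j | j) hb ha1 hb1
  · exact absurd (hrot _ ha) ha1
  · exact absurd (hrot _ ha) ha1
  · exact absurd (hrot _ hb) hb1
  · have := hrot (j - i) (by simpa using R.mul_mem ha hb)
    rw [DihedralGroup.one_def, DihedralGroup.r.injEq, sub_eq_zero] at this
    rw [this]

/-! ### Simplicity of the minimal normal subgroup -/

theorem mem_normalizer_of_conj {G : Type*} [Group G] [Finite G] {K : Subgroup G} {g : G}
    (h : ∀ k ∈ K, g * k * g⁻¹ ∈ K) : g ∈ Subgroup.normalizer (K : Set G) :=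
  Subgroup.mem_normalizer_fintype h

/-- A finite normal subgroup `N` with `C_G(N) = 1` and without proper non-trivial `H`-invariant
subgroups is solvable as soon as `H` has a non-trivial normal `p`-subgroup. This covers a regular
minimal normal subgroup, `H` being a point stabilizer. -/
theorem isSolvable_of_regular {G : Type*} [Group G] [Finite G] (N H : Subgroup G) [N.Normal]
    (hmax : ∀ K ≤ N, (∀ h ∈ H, ∀ k ∈ K, h * k * h⁻¹ ∈ K) → K = ⊥ ∨ K = N)
    (hC : Subgroup.centralizer (N : Set G) = ⊥) {p : ℕ} [Fact p.Prime] (P : Subgroup H)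
    [hPn : P.Normal] (hP : IsPGroup p P) (hPne : P ≠ ⊥) : Group.IsSolvable N := by
  let _ : MulDistribMulAction H N :=
    MulDistribMulAction.compHom N ((MulAut.conjNormal (H := N)).comp H.subtype)
  have hsmul : ∀ (h : H) (x : N), ((h • x : N) : G) = h * x * (h : G)⁻¹ := fun _ _ => rfl
  have hfix : ∀ x : N, (∀ g ∈ P, g • x = x) → x = 1 := by
    let K : Subgroup G := N ⊓ Subgroup.centralizer (P.map H.subtype : Set G)
    have hK : K = ⊥ := by
      refine (hmax K inf_le_left ?_).resolve_right fun h => hPne ?_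
      · rintro h hh k ⟨hkN, hkC⟩
        refine ⟨(inferInstance : N.Normal).conj_mem k hkN h, ?_⟩
        replace hkC := Subgroup.mem_centralizer_iff.1 hkC
        refine Subgroup.mem_centralizer_iff.2 ?_
        rintro _ ⟨g, hg, rfl⟩
        have h1 := hkC _ ⟨_, hPn.conj_mem g hg ⟨h, hh⟩⁻¹, rfl⟩
        simp only [Subgroup.coe_subtype, Subgroup.coe_mul, Subgroup.coe_inv, inv_inv] at h1 ⊢
        calc (g : G) * (h * k * h⁻¹) = h * (h⁻¹ * g * h * k) * h⁻¹ := by group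
          _ = h * (k * (h⁻¹ * g * h)) * h⁻¹ := by rw [h1]
          _ = h * k * h⁻¹ * g := by group
      · have h1 : P.map H.subtype ≤ Subgroup.centralizer (N : Set G) :=
          Subgroup.le_centralizer_iff.1 (h ▸ inf_le_right)
        rw [hC, le_bot_iff] at h1
        exact (Subgroup.map_eq_bot_iff_of_injective _ H.subtype_injective).1 h1
    intro x hx
    have : (x : G) ∈ K := by
      refine ⟨x.2, Subgroup.mem_centralizer_iff.2 ?_⟩
      rintro _ ⟨g, hg, rfl⟩
      have := congrArg Subtype.val (hx g hg)
      rw [hsmul] at this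
      exact mul_inv_eq_iff_eq_mul.1 this
    rw [hK, Subgroup.mem_bot] at this
    exact Subtype.ext this
  rcases subsingleton_or_nontrivial N with hN | hN
  · infer_instance
  let q := (Nat.card N).minFac
  have hq : Fact q.Prime := ⟨Nat.minFac_prime Finite.one_lt_card.ne'⟩
  obtain ⟨S, hS⟩ := exists_sylow_fixed P hP hfix q
  rcases hmax ((S : Subgroup N).map N.subtype) (Subgroup.map_subtype_le _) (by
    rintro h hh _ ⟨k, hk, rfl⟩
    refine ⟨(⟨h, hh⟩ : H) • k, ?_, rfl⟩
    have h1 := hS ⟨h, hh⟩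
    have h2 : (⟨h, hh⟩ : H) • k ∈ (((⟨h, hh⟩ : H) • S : Sylow q N) : Subgroup N) :=
      Subgroup.smul_mem_pointwise_smul _ _ _ hk
    rwa [h1] at h2) with h | h
  · exact absurd ((Subgroup.map_eq_bot_iff_of_injective _ N.subtype_injective).1 h)
      (S.ne_bot_of_dvd_card (Nat.minFac_dvd _))
  · have htop : (S : Subgroup N) = ⊤ := by
      rw [eq_top_iff]
      intro x _
      have : (x : G) ∈ (S : Subgroup N).map N.subtype := by rw [h]; exact x.2
      obtain ⟨y, hy, hyx⟩ := this
      rwa [← Subtype.ext hyx]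
    have hN : IsPGroup q N := by
      have := S.isPGroup'
      rw [htop] at this
      exact this.of_equiv Subgroup.topEquiv
    have := hN.isNilpotent
    infer_instance

/-- A non-solvable minimal normal subgroup `N` with trivial centralizer is simple when `G` has a
core-free maximal subgroup `H` that is dihedral. -/
theorem simple_of_coatom_dihedral {G : Type*} [Group G] [Finite G] (H N : Subgroup G)
    (hH : IsCoatom H) (hcore : ∀ K : Subgroup G, K.Normal → K ≤ H → K = ⊥)
    {n : ℕ} (hn : 3 ≤ n) (e : H ≃* DihedralGroup n) [hN : N.Normal]
    (hmin : ∀ K : Subgroup G, K.Normal → K ≤ N → K ≠ ⊥ → K = N)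
    (hNs : ¬ Group.IsSolvable N) (hC : Subgroup.centralizer (N : Set G) = ⊥) :
    IsSimpleGroup N := by
  have hHs : Group.IsSolvable H := by
    have := dihedral_isSolvable n
    exact Group.isSolvable_of_isSolvable_injective (f := e.toMonoidHom) e.injective
  have hNbot : N ≠ ⊥ := by
    rintro rfl
    exact hNs inferInstance
  have hNH : N ⊔ H = ⊤ := by
    refine hH.2 _ (lt_of_le_of_ne le_sup_right fun h => hNbot (hcore N hN ?_))
    rw [h]; exact le_sup_left
  have hdec : ∀ g : G, ∃ h ∈ H, ∃ m ∈ N, g = h * m := by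
    intro g
    obtain ⟨h, hh, m, hm, rfl⟩ := Subgroup.mem_sup_of_normal_right.1
      (show g ∈ H ⊔ N by rw [sup_comm, hNH]; trivial)
    exact ⟨h, hh, m, hm, rfl⟩
  -- there is no `H`-invariant subgroup strictly between `N ⊓ H` and `N`
  have hmax : ∀ K ≤ N, N ⊓ H ≤ K → (∀ h ∈ H, ∀ k ∈ K, h * k * h⁻¹ ∈ K) → K ≤ H ∨ K = N := by
    intro K hKN hLK hinv
    by_cases hKH : K ≤ H
    · exact Or.inl hKH
    right
    have htop : K ⊔ H = ⊤ := by
      refine hH.2 _ (lt_of_le_of_ne le_sup_right fun h => hKH ?_)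
      rw [h]; exact le_sup_left
    refine le_antisymm hKN fun x hx => ?_
    obtain ⟨k, hk, h, hh, rfl⟩ := exists_mul_of_mem_sup hinv (x := x) (by rw [htop]; trivial)
    refine K.mul_mem hk (hLK ⟨?_, hh⟩)
    exact (Subgroup.mul_mem_cancel_left N (hKN hk)).1 hx
  -- the intersection `N ⊓ H` is non-trivial
  set L := N ⊓ H with hLdef
  have hLinv : ∀ h ∈ H, ∀ l ∈ L, h * l * h⁻¹ ∈ L := fun h hh l hl =>
    ⟨hN.conj_mem l hl.1 h, H.mul_mem (H.mul_mem hh hl.2) (H.inv_mem hh)⟩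
  have hL : L ≠ ⊥ := by
    intro hL
    obtain ⟨p, hp, z, hz, hzn⟩ := dihedral_exists_normal_prime hn
    have : Fact p.Prime := ⟨hp⟩
    have hzn' : ((Subgroup.zpowers z).comap e.toMonoidHom).Normal := hzn.comap _
    refine hNs (isSolvable_of_regular N H (fun K hKN hinv => ?_) hC (p := p)
      ((Subgroup.zpowers z).comap e.toMonoidHom) ?_ ?_)
    · rcases hmax K hKN (by rw [hL]; exact bot_le) hinv with h | h
      · left
        rw [← le_bot_iff, ← hL]
        exact le_inf hKN h
      · exact Or.inr h
    · refine IsPGroup.comap_of_injective ?_ _ e.injective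
      exact IsPGroup.of_card (n := 1) (by rw [Nat.card_zpowers, hz, pow_one])
    · intro h
      have : e.symm z ∈ (Subgroup.zpowers z).comap e.toMonoidHom := by
        simp
      rw [h, Subgroup.mem_bot] at this
      have hz1 : z = 1 := by simpa using this
      rw [hz1, orderOf_one] at hz
      exact hp.one_lt.ne hz
  -- a minimal `N`-invariant subgroup of `N`
  obtain ⟨T, ⟨hTN, hTinv, hTbot⟩, hTmin⟩ := exists_minimal_of_wellFoundedLT
    (fun K : Subgroup G => K ≤ N ∧ (∀ x ∈ N, ∀ k ∈ K, x * k * x⁻¹ ∈ K) ∧ K ≠ ⊥)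
    ⟨N, le_rfl, fun x hx k hk => N.mul_mem (N.mul_mem hx hk) (N.inv_mem hx), hNbot⟩
  replace hTmin : ∀ K ≤ T, (∀ x ∈ N, ∀ k ∈ K, x * k * x⁻¹ ∈ K) → K ≠ ⊥ → T ≤ K :=
    fun K hK hKinv hKbot => hTmin ⟨hK.trans hTN, hKinv, hKbot⟩ hK
  set C := Subgroup.centralizer (T : Set G) with hCdef
  have hCcomm : ∀ c ∈ C, ∀ t ∈ T, t * c = c * t := fun c hc t ht =>
    Subgroup.mem_centralizer_iff.1 hc t ht
  -- `T` meets its distinct conjugates trivially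
  have hTdisj : ∀ g : G, ¬ (∀ t ∈ T, g * t * g⁻¹ ∈ T) → ∀ t ∈ T, g * t * g⁻¹ ∈ T → t = 1 := by
    intro g hg t ht htg
    by_contra ht1
    refine hg ?_
    have hle := hTmin (T ⊓ T.comap (MulAut.conj g).toMonoidHom) inf_le_left (by
      rintro x hx k ⟨hk, hk'⟩
      refine ⟨hTinv x hx k hk, ?_⟩
      have := hTinv (g * x * g⁻¹) (hN.conj_mem x hx g) _ hk'
      convert this using 1
      simp [mul_assoc]) (by
      intro h
      exact ht1 (Subgroup.mem_bot.1 (h ▸ ⟨ht, htg⟩ :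
        t ∈ (⊥ : Subgroup G))))
    exact fun t' ht' => (hle ht').2
  -- and centralizes them
  have hTconj : ∀ g : G, ¬ (∀ t ∈ T, g * t * g⁻¹ ∈ T) → ∀ t ∈ T, g * t * g⁻¹ ∈ C := by
    intro g hg b hb
    refine Subgroup.mem_centralizer_iff.2 fun a ha => ?_
    have hbN : g * b * g⁻¹ ∈ N := hN.conj_mem b (hTN hb) g
    -- the commutator of `a` and `g * b * g⁻¹` lies in `T` and in its conjugate
    have h1 : a * (g * b * g⁻¹ * a⁻¹ * (g * b * g⁻¹)⁻¹) ∈ T :=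
      T.mul_mem ha (hTinv _ hbN _ (T.inv_mem ha))
    have h2 : g⁻¹ * (a * (g * b * g⁻¹ * a⁻¹ * (g * b * g⁻¹)⁻¹)) * g ∈ T := by
      have h3 := T.mul_mem (hTinv (g⁻¹ * a * g)
        (by simpa using hN.conj_mem a (hTN ha) g⁻¹) b hb) (T.inv_mem hb)
      convert h3 using 1
      group
    have h4 := hTdisj g hg _ h2 (by convert h1 using 1; group)
    have h5 : a * (g * b * g⁻¹ * a⁻¹ * (g * b * g⁻¹)⁻¹) = 1 := by
      have := congrArg (fun x => g * x * g⁻¹) h4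
      simpa [mul_assoc] using this
    calc a * (g * b * g⁻¹) = (a * (g * b * g⁻¹ * a⁻¹ * (g * b * g⁻¹)⁻¹)) * (g * b * g⁻¹ * a) := by
          group
      _ = g * b * g⁻¹ * a := by rw [h5, one_mul]
  have hNcl : N = Subgroup.normalClosure (T : Set G) := by
    refine (hmin _ inferInstance (Subgroup.normalClosure_le_normal hTN) fun h => hTbot ?_).symm
    rw [← le_bot_iff, ← h]
    exact Subgroup.le_normalClosure
  have hNle : ∀ K : Subgroup G, (∀ g : G, ∀ t ∈ T, g * t * g⁻¹ ∈ K) → N ≤ K := by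
    intro K hK
    rw [hNcl, Subgroup.normalClosure, Subgroup.closure_le]
    intro x hx
    obtain ⟨t, ht, hc⟩ := Group.mem_conjugatesOfSet_iff.1 hx
    obtain ⟨g, rfl⟩ := isConj_iff.1 hc
    exact hK g t ht
  have hNTC : ∀ x ∈ N, ∃ t ∈ T, ∃ c ∈ C, x = t * c := by
    intro x hx
    have : N ≤ T ⊔ C := by
      refine hNle _ fun g t ht => ?_
      by_cases hg : ∀ t ∈ T, g * t * g⁻¹ ∈ T
      · exact Subgroup.mem_sup_left (hg t ht)
      · exact Subgroup.mem_sup_right (hTconj g hg t ht)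
    refine exists_mul_of_mem_sup (fun c hc t ht => ?_) (this hx)
    rwa [← hCcomm c hc t ht, mul_inv_cancel_right]
  have hTC : ∀ t ∈ T, t ∈ C → t = 1 := by
    intro t ht htC
    by_contra ht1
    have hle := hTmin (T ⊓ C) inf_le_left (by
      rintro x hx k ⟨hk, hk'⟩
      refine ⟨hTinv x hx k hk, Subgroup.mem_centralizer_iff.2 fun a ha => ?_⟩
      have h1 := hCcomm k hk' (x⁻¹ * a * x) (by simpa using hTinv x⁻¹ (N.inv_mem hx) a ha)
      calc a * (x * k * x⁻¹) = x * (x⁻¹ * a * x * k) * x⁻¹ := by group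
        _ = x * (k * (x⁻¹ * a * x)) * x⁻¹ := by rw [h1]
        _ = x * k * x⁻¹ * a := by group) (fun h => ht1 (Subgroup.mem_bot.1 (h ▸ ⟨ht, htC⟩ :
        t ∈ (⊥ : Subgroup G))))
    refine hTbot ?_
    rw [← le_bot_iff, ← hC]
    intro a ha
    refine Subgroup.mem_centralizer_iff.2 fun x hx => ?_
    obtain ⟨b, hb, c, hc, rfl⟩ := hNTC x hx
    have h1 := hCcomm a (hle ha).2 b hb
    have h2 := hCcomm c hc a ha
    rw [mul_assoc, ← h2, ← mul_assoc, h1, mul_assoc]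
  have hTnc : ¬ ∀ a b : T, a * b = b * a := by
    intro h
    refine hTbot ((Subgroup.eq_bot_iff_forall _).2 fun t ht => hTC t ht ?_)
    exact Subgroup.mem_centralizer_iff.2 fun a ha => congrArg Subtype.val (h ⟨a, ha⟩ ⟨t, ht⟩)
  have hTsimple : IsSimpleGroup T := by
    have : Nontrivial T := (Subgroup.nontrivial_iff_ne_bot T).2 hTbot
    refine ⟨fun M hM => ?_⟩
    by_cases hMbot : M = ⊥
    · exact Or.inl hMbot
    right
    have hle := hTmin (M.map T.subtype) (Subgroup.map_subtype_le _) (by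
      rintro x hx _ ⟨m, hm, rfl⟩
      obtain ⟨t, ht, c, hc, rfl⟩ := hNTC x hx
      refine ⟨⟨t, ht⟩ * m * ⟨t, ht⟩⁻¹, hM.conj_mem m hm _, ?_⟩
      have h1 := hCcomm c hc m m.2
      simp only [Subgroup.coe_subtype, Subgroup.coe_mul, Subgroup.coe_inv]
      calc t * (m : G) * t⁻¹ = t * (m * c) * c⁻¹ * t⁻¹ := by group
        _ = t * (c * m) * c⁻¹ * t⁻¹ := by rw [h1]
        _ = t * c * m * (t * c)⁻¹ := by group)
      fun h => hMbot ((Subgroup.map_eq_bot_iff_of_injective _ T.subtype_injective).1 h)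
    rw [eq_top_iff]
    intro t _
    obtain ⟨m, hm, hmt⟩ := hle t.2
    rwa [← Subtype.ext hmt]
  by_cases hTeq : T = N
  · rwa [← hTeq]
  exfalso
  -- some element of `H` moves `T`
  obtain ⟨h₀, hh₀, hh₀T⟩ : ∃ h ∈ H, ¬ ∀ t ∈ T, h * t * h⁻¹ ∈ T := by
    by_contra! hall
    -- otherwise `T` would be normalized by `N` and `H`, hence by `G`
    refine hTeq (hmin T ⟨fun t ht g => ?_⟩ hTN hTbot)
    obtain ⟨h, hh, m, hm, rfl⟩ := hdec g
    have := hall h hh _ (hTinv m hm t ht)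
    convert this using 1
    group
  have hLC : ∀ l ∈ L, ∀ c ∈ C, l * c * l⁻¹ ∈ C := by
    intro l hl k hk
    refine Subgroup.mem_centralizer_iff.2 fun a ha => ?_
    have h1 := hCcomm k hk (l⁻¹ * a * l) (by simpa using hTinv l⁻¹ (N.inv_mem hl.1) a ha)
    calc a * (l * k * l⁻¹) = l * (l⁻¹ * a * l * k) * l⁻¹ := by group
      _ = l * (k * (l⁻¹ * a * l)) * l⁻¹ := by rw [h1]
      _ = l * k * l⁻¹ * a := by group
  have hCL : ∀ x ∈ C ⊔ L, ∃ c ∈ C, ∃ l ∈ L, x = c * l := fun x hx => exists_mul_of_mem_sup hLC hx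
  -- `C ⊔ L` does not contain `N`, because the projection of `L` to `T` is solvable
  have hNCL : ¬ N ≤ C ⊔ L := by
    intro hle
    -- the projection of `L` is the image in `T` of `L.comap φ`, with `φ (t, c) = t * c`
    let φ : T × C →* G := MonoidHom.noncommCoprod T.subtype C.subtype
      (fun t c => hCcomm c c.2 t t.2)
    have hφ : Function.Injective φ := by
      rw [injective_iff_map_eq_one]
      rintro ⟨t, c⟩ htc
      have h1 : (t : G) * c = 1 := htc
      have h2 : (t : G) = 1 := hTC t t.2 (by
        rw [eq_inv_of_mul_eq_one_left h1]; exact C.inv_mem c.2)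
      have h3 : (c : G) = 1 := by rwa [h2, one_mul] at h1
      exact Prod.ext (Subtype.ext h2) (Subtype.ext h3)
    have hWs : Group.IsSolvable (L.comap φ) := by
      let ψ : L.comap φ →* H :=
        (φ.comp (L.comap φ).subtype).codRestrict H (fun w => w.2.2)
      refine Group.isSolvable_of_isSolvable_injective (f := ψ) fun a b hab => ?_
      exact Subtype.ext (hφ (congrArg Subtype.val hab))
    have hTs : Group.IsSolvable T := by
      refine Group.isSolvable_of_surjective
        (f := (MonoidHom.fst T C).comp (L.comap φ).subtype) fun t => ?_
      obtain ⟨c, hc, l, hl, htcl⟩ := hCL t (hle (hTN t.2))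
      refine ⟨⟨(t, ⟨c⁻¹, C.inv_mem hc⟩), ?_⟩, rfl⟩
      change (t : G) * c⁻¹ ∈ L
      rw [hCcomm _ (C.inv_mem hc) t t.2, htcl, inv_mul_cancel_left]
      exact hl
    exact hTnc (IsSimpleGroup.comm_iff_isSolvable.2 hTs)
  -- by maximality of `H`, the projection of `L` to `T` lies in `L`
  have hproj : ∀ t ∈ T, t ∈ C ⊔ L → t ∈ L := by
    -- the intersection of `N` with all `H`-conjugates of `C ⊔ L`
    let K : Subgroup G := N ⊓ ⨅ h : H, (C ⊔ L).comap (MulAut.conj (h : G)).toMonoidHom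
    have hKmem : ∀ x, x ∈ K ↔ x ∈ N ∧ ∀ h ∈ H, h * x * h⁻¹ ∈ C ⊔ L := by
      intro x
      simp [K, Subgroup.mem_inf, Subgroup.mem_iInf]
    have hK : K ≤ H := by
      refine (hmax K inf_le_left (fun l hl => ?_) fun h hh k hk => ?_).resolve_right fun h => ?_
      · exact (hKmem l).2 ⟨hl.1, fun h hh => Subgroup.mem_sup_right (hLinv h hh l hl)⟩
      · rw [hKmem] at hk ⊢
        refine ⟨hN.conj_mem k hk.1 h, fun h' hh' => ?_⟩
        have := hk.2 (h' * h) (H.mul_mem hh' hh)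
        convert this using 1
        group
      · refine hNCL fun x hx => ?_
        rw [← h, hKmem] at hx
        simpa using hx.2 1 H.one_mem
    intro t ht htCL
    refine ⟨hTN ht, hK ((hKmem t).2 ⟨hTN ht, fun h hh => ?_⟩)⟩
    by_cases hT : ∀ t ∈ T, h * t * h⁻¹ ∈ T
    · obtain ⟨c, hc, l, hl, rfl⟩ := hCL t htCL
      have h1 : h * (c * l) * h⁻¹ = (h * c * h⁻¹) * (h * l * h⁻¹) := by group
      rw [h1]
      refine Subgroup.mul_mem_sup ?_ (hLinv h hh l hl)
      -- `h` normalizes `T`, hence its centralizer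
      have hT' : ∀ t ∈ T, h⁻¹ * t * h ∈ T := by
        have hmem : h ∈ Subgroup.normalizer (T : Set G) :=
          mem_normalizer_of_conj hT
        intro t ht
        exact (Subgroup.mem_normalizer_iff''.1 hmem t).1 ht
      refine Subgroup.mem_centralizer_iff.2 fun a ha => ?_
      have h2 := hCcomm c hc _ (hT' a ha)
      calc a * (h * c * h⁻¹) = h * (h⁻¹ * a * h * c) * h⁻¹ := by group
        _ = h * (c * (h⁻¹ * a * h)) * h⁻¹ := by rw [h2]
        _ = h * c * h⁻¹ * a := by group
    · exact Subgroup.mem_sup_left (hTconj h hT t ht)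
  have hLdec : ∀ l ∈ L, ∃ a ∈ T, a ∈ L ∧ ∃ c ∈ C, l = a * c := by
    intro l hl
    obtain ⟨a, ha, c, hc, rfl⟩ := hNTC l hl.1
    refine ⟨a, ha, hproj a ha ?_, c, hc, rfl⟩
    have := (C ⊔ L).mul_mem (Subgroup.mem_sup_right hl) (Subgroup.mem_sup_left (C.inv_mem hc))
    simpa using this
  -- `T ⊓ L` is non-trivial, otherwise `L` would centralize all conjugates of `T`
  obtain ⟨s, hsT, hsL, hs1⟩ : ∃ s ∈ T, s ∈ L ∧ s ≠ 1 := by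
    by_contra! hall
    have hLleC : L ≤ C := by
      intro l hl
      obtain ⟨a, ha, haL, c, hc, rfl⟩ := hLdec l hl
      rw [hall a ha haL, one_mul]
      exact hc
    have hNL : N ≤ Subgroup.centralizer (L : Set G) := by
      refine hNle _ fun g t ht => ?_
      obtain ⟨h, hh, m, hm, rfl⟩ := hdec g
      refine Subgroup.mem_centralizer_iff.2 fun l hl => ?_
      have h1 := hCcomm _ (hLleC (by simpa using hLinv h⁻¹ (H.inv_mem hh) l hl)) _
        (hTinv m hm t ht)
      calc l * (h * m * t * (h * m)⁻¹) = h * (h⁻¹ * l * h * (m * t * m⁻¹)) * h⁻¹ := by group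
        _ = h * (m * t * m⁻¹ * (h⁻¹ * l * h)) * h⁻¹ := by rw [h1]
        _ = h * m * t * (h * m)⁻¹ * l := by group
    refine hL ?_
    rw [← le_bot_iff, ← hC]
    exact Subgroup.le_centralizer_iff.1 hNL
  -- the dihedral structure of `H` forces `T ⊓ L = {1, s}`
  have hR : ∀ a ∈ T, a ∈ L → a = 1 ∨ a = s := by
    intro a ha haL
    by_contra! hne
    have key := dihedral_eq_of_disjoint_conj
      (((T ⊓ L).comap H.subtype).comap e.symm.toMonoidHom) (e ⟨h₀, hh₀⟩) (by
        intro x hx hx'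
        have hx1 : ((e.symm x : H) : G) ∈ T := hx.1
        have hx2 : h₀ * ((e.symm x : H) : G) * h₀⁻¹ ∈ T := by
          have := hx'.1
          simpa using this
        have := hTdisj h₀ hh₀T _ hx1 hx2
        have h3 : e.symm x = 1 := Subtype.ext this
        simpa using h3)
      (e ⟨a, haL.2⟩) (by simpa [Subgroup.mem_subgroupOf] using ⟨ha, haL⟩) (e ⟨s, hsL.2⟩)
      (by simpa [Subgroup.mem_subgroupOf] using ⟨hsT, hsL⟩)
      (by simpa using hne.1) (by simpa using hs1)
    exact hne.2 (congrArg Subtype.val (e.injective key))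
  have hss : s * s = 1 := by
    rcases hR s⁻¹ (T.inv_mem hsT) (L.inv_mem hsL) with h | h
    · exact absurd (inv_eq_one.1 h) hs1
    · nth_rewrite 1 [← h]
      exact inv_mul_cancel s
  -- `N_G(L) = H`, so an element of `T` commuting with `s` lies in `T ⊓ L`
  have hcent : ∀ t ∈ T, t * s = s * t → t = 1 ∨ t = s := by
    intro t ht hts
    have htL : t ∈ Subgroup.centralizer (L : Set G) := by
      refine Subgroup.mem_centralizer_iff.2 fun l hl => ?_
      obtain ⟨a, ha, haL, c, hc, rfl⟩ := hLdec l hl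
      have h1 := hCcomm c hc t ht
      have h2 : a * t = t * a := by
        rcases hR a ha haL with rfl | rfl
        · simp
        · exact hts.symm
      rw [mul_assoc, ← h1, ← mul_assoc, h2, mul_assoc]
    have hnorm : Subgroup.normalizer (L : Set G) = H := by
      by_contra hne
      have hle : H ≤ Subgroup.normalizer (L : Set G) := fun h hh =>
        mem_normalizer_of_conj (hLinv h hh)
      have htop := hH.2 _ (lt_of_le_of_ne hle (Ne.symm hne))
      exact hL (hcore L (Subgroup.normalizer_eq_top_iff.1 htop) inf_le_right)
    refine hR t ht ⟨hTN ht, ?_⟩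
    rw [← hnorm]
    exact mem_normalizer_of_conj fun l hl => by
      rwa [← Subgroup.mem_centralizer_iff.1 htL l hl, mul_inv_cancel_right]
  refine hTnc (comm_of_simple_of_involution (s := ⟨s, hsT⟩) ?_ ?_ ?_)
  · exact fun h => hs1 (congrArg Subtype.val h)
  · exact Subtype.ext hss
  · rintro ⟨t, ht⟩ hts
    rcases hcent t ht (congrArg Subtype.val hts) with h | h
    · exact Or.inl (Subtype.ext h)
    · exact Or.inr (Subtype.ext h)

/-! ### Minimal normal subgroups -/

theorem comm_of_minimal_of_isSolvable {G : Type*} [Group G] (N : Subgroup G) [N.Normal]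
    (hNbot : N ≠ ⊥) (hmin : ∀ K : Subgroup G, K.Normal → K ≤ N → K ≠ ⊥ → K = N)
    [Group.IsSolvable N] : ∀ a ∈ N, ∀ b ∈ N, a * b = b * a := by
  have : Nontrivial N := (Subgroup.nontrivial_iff_ne_bot N).2 hNbot
  have hlt := Group.IsSolvable.commutator_lt_top_of_nontrivial N
  have hcomm : ⁅N, N⁆ = ⊥ := by
    by_contra hne
    have h := hmin ⁅N, N⁆ inferInstance (Subgroup.commutator_le_self N) hne
    rw [← Subgroup.map_subtype_commutator] at h
    refine hlt.ne (Subgroup.map_injective N.subtype_injective ?_)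
    rw [h, ← MonoidHom.range_eq_map, Subgroup.range_subtype]
  intro a ha b hb
  rw [← commutatorElement_eq_one_iff_mul_comm, ← Subgroup.mem_bot, ← hcomm]
  exact Subgroup.commutator_mem_commutator ha hb

/-- The elements `x` of `N` with `x ^ p = 1`, for a prime `p` dividing `|N|`, form a non-trivial
normal subgroup of `G`, which is `N` by minimality. -/
theorem exists_orderOf_eq_of_minimal {G : Type*} [Group G] [Finite G] (N : Subgroup G)
    [hN : N.Normal]
    (hNbot : N ≠ ⊥) (hmin : ∀ K : Subgroup G, K.Normal → K ≤ N → K ≠ ⊥ → K = N)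
    (hcomm : ∀ a ∈ N, ∀ b ∈ N, a * b = b * a) :
    ∃ p : ℕ, p.Prime ∧ ∀ g ∈ N, g ≠ 1 → orderOf g = p := by
  have : Nontrivial N := (Subgroup.nontrivial_iff_ne_bot N).2 hNbot
  have hp : (Nat.card N).minFac.Prime := Nat.minFac_prime Finite.one_lt_card.ne'
  generalize hpdef : (Nat.card N).minFac = p at hp
  have : Fact p.Prime := ⟨hp⟩
  let K : Subgroup G :=
    { carrier := {x | x ∈ N ∧ x ^ p = 1}
      one_mem' := ⟨N.one_mem, one_pow p⟩
      mul_mem' := fun {a b} ha hb => ⟨N.mul_mem ha.1 hb.1, by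
        rw [Commute.mul_pow (hcomm a ha.1 b hb.1), ha.2, hb.2, one_mul]⟩
      inv_mem' := fun {a} ha => ⟨N.inv_mem ha.1, by
        rw [inv_pow, ha.2, inv_one]⟩ }
  have hK : K = N := by
    refine hmin K ⟨fun x hx g => ⟨hN.conj_mem x hx.1 g, ?_⟩⟩ (fun x hx => hx.1) fun h => ?_
    · rw [conj_pow, hx.2, mul_one, mul_inv_cancel]
    · obtain ⟨x, hx⟩ := exists_prime_orderOf_dvd_card' (G := N) p
        (hpdef ▸ Nat.minFac_dvd _)
      have hxK : (x : G) ∈ K := ⟨x.2, by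
        rw [← Subgroup.coe_pow, ← hx, pow_orderOf_eq_one, Subgroup.coe_one]⟩
      rw [h, Subgroup.mem_bot] at hxK
      rw [Subtype.ext (a2 := (1 : N)) hxK, orderOf_one] at hx
      exact hp.one_lt.ne hx
  refine ⟨p, hp, fun g hg hg1 => orderOf_eq_prime ?_ hg1⟩
  rw [← hK] at hg
  exact hg.2

/-- If `Z = C_G(N)` were non-trivial, then `G = Z H`, and the non-solvable group `N` would embed in
the quotient `G ⧸ Z` of the solvable group `H`. -/
theorem centralizer_eq_bot_of_minimal {G : Type*} [Group G] (H N : Subgroup G)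
    (hsup : ∀ K : Subgroup G, K.Normal → K ≠ ⊥ → K ⊔ H = ⊤) [Group.IsSolvable H] [N.Normal]
    (hmin : ∀ K : Subgroup G, K.Normal → K ≤ N → K ≠ ⊥ → K = N)
    (hNs : ¬ Group.IsSolvable N) : Subgroup.centralizer (N : Set G) = ⊥ := by
  by_contra hne
  set Z := Subgroup.centralizer (N : Set G) with hZ
  have hZH := hsup Z inferInstance hne
  have hNZ : N ⊓ Z = ⊥ := by
    by_contra hbot
    have h := hmin (N ⊓ Z) inferInstance inf_le_left hbot
    refine hNs (Group.isSolvable_of_comm fun a b => Subtype.ext ?_)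
    have hb : (b : G) ∈ N ⊓ Z := by rw [h]; exact b.2
    exact Subgroup.mem_centralizer_iff.1 hb.2 a a.2
  have hQ : Group.IsSolvable (G ⧸ Z) := by
    refine Group.isSolvable_of_surjective (f := (QuotientGroup.mk' Z).comp H.subtype) ?_
    rintro ⟨g⟩
    obtain ⟨h, hh, z, hz, rfl⟩ := Subgroup.mem_sup_of_normal_right.1
      (show g ∈ H ⊔ Z by rw [sup_comm, hZH]; trivial)
    exact ⟨⟨h, hh⟩, QuotientGroup.eq.2 (by simpa using hz)⟩
  refine hNs (Group.isSolvable_of_isSolvable_injective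
    (f := (QuotientGroup.mk' Z).comp N.subtype) ?_)
  rw [injective_iff_map_eq_one]
  intro a ha
  have haZ : (a : G) ∈ Z := (QuotientGroup.eq_one_iff _).1 ha
  have : (a : G) ∈ N ⊓ Z := ⟨a.2, haZ⟩
  rw [hNZ, Subgroup.mem_bot] at this
  exact Subtype.ext this

/-- **Lemma 2.5 (O'Nan–Scott reduction).** A finite primitive permutation group with
dihedral point stabilizers is of affine type (it has an elementary abelian regular
normal subgroup) or of almost simple type (it has a non-abelian simple normal subgroup
with trivial centralizer). -/
theorem stmt_3 {Ω G : Type*} [Finite Ω] [Group G] [Finite G]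
    [MulAction G Ω] [FaithfulSMul G Ω]
    (hprim : IsPrimitiveAction G Ω) (n : ℕ) (hn : 3 ≤ n)
    (hstab : ∀ x : Ω, Nonempty (MulAction.stabilizer G x ≃* DihedralGroup n)) :
    -- affine type: an elementary abelian regular normal subgroup
    (∃ N : Subgroup G, N.Normal ∧
      MulAction.IsPretransitive N Ω ∧
      (∀ g ∈ N, (∃ x : Ω, g • x = x) → g = 1) ∧
      (∀ a ∈ N, ∀ b ∈ N, a * b = b * a) ∧
      (∃ p : ℕ, p.Prime ∧ ∀ g ∈ N, g ≠ 1 → orderOf g = p)) ∨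
    -- almost simple type: a non-abelian simple normal subgroup with trivial centralizer
    (∃ T : Subgroup G, T.Normal ∧ IsSimpleGroup T ∧
      (¬ ∀ a b : T, a * b = b * a) ∧
      Subgroup.centralizer (T : Set G) = ⊥) := by
  obtain ⟨htrans, hblock⟩ := hprim
  have hpre : MulAction.IsPreprimitive G Ω :=
    { isTrivialBlock_of_isBlock := fun {B} hB => hblock B hB }
  rcases isEmpty_or_nonempty Ω with hΩ | ⟨⟨x₀⟩⟩
  · -- with no points at all, faithfulness makes `G` trivial
    refine Or.inl ⟨⊥, inferInstance, ⟨fun x => isEmptyElim x⟩, fun g hg _ => Subgroup.mem_bot.1 hg,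
      ?_, 2, Nat.prime_two, fun g hg hg1 => absurd (Subgroup.mem_bot.1 hg) hg1⟩
    rintro a ha b hb
    rw [Subgroup.mem_bot.1 ha, Subgroup.mem_bot.1 hb]
  obtain ⟨e⟩ := hstab x₀
  have hnt : Nontrivial Ω := by
    by_contra h
    rw [not_nontrivial_iff_subsingleton] at h
    obtain ⟨g, hg⟩ := exists_ne (1 : DihedralGroup n)
    refine hg (e.symm.injective (Subtype.ext (FaithfulSMul.eq_of_smul_eq_smul (α := Ω) fun x => ?_)))
    exact Subsingleton.elim _ _
  have hcoatom : ∀ x : Ω, IsCoatom (MulAction.stabilizer G x) := fun x =>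
    MulAction.IsPreprimitive.isCoatom_stabilizer_of_isPreprimitive G x
  have hcore : ∀ x : Ω, ∀ K : Subgroup G, K.Normal → K ≤ MulAction.stabilizer G x → K = ⊥ := by
    intro x K hK hKx
    refine (Subgroup.eq_bot_iff_forall K).2 fun k hk => ?_
    refine FaithfulSMul.eq_of_smul_eq_smul (α := Ω) fun y => ?_
    obtain ⟨g, rfl⟩ := MulAction.exists_smul_eq G x y
    have h1 := MulAction.mem_stabilizer_iff.1 (hKx (hK.conj_mem k hk g⁻¹))
    rw [inv_inv, mul_smul, mul_smul, inv_smul_eq_iff] at h1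
    rw [h1, one_smul]
  have hsup : ∀ x : Ω, ∀ K : Subgroup G, K.Normal → K ≠ ⊥ → K ⊔ MulAction.stabilizer G x = ⊤ := by
    intro x K hK hKbot
    refine (hcoatom x).2 _ (lt_of_le_of_ne le_sup_right fun h => hKbot (hcore x K hK ?_))
    rw [h]; exact le_sup_left
  have : Group.IsSolvable (MulAction.stabilizer G x₀) := by
    have := dihedral_isSolvable n
    exact Group.isSolvable_of_isSolvable_injective (f := e.toMonoidHom) e.injective
  have hGbot : (⊤ : Subgroup G) ≠ ⊥ := by
    intro h
    refine (hcoatom x₀).1 ?_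
    rw [eq_top_iff, h]; exact bot_le
  obtain ⟨N, ⟨hN, hNbot⟩, hNmin⟩ := exists_minimal_of_wellFoundedLT
    (fun K : Subgroup G => K.Normal ∧ K ≠ ⊥) ⟨⊤, inferInstance, hGbot⟩
  have hmin : ∀ K : Subgroup G, K.Normal → K ≤ N → K ≠ ⊥ → K = N :=
    fun K hK hKN hKbot => le_antisymm hKN (hNmin ⟨hK, hKbot⟩ hKN)
  by_cases hNs : Group.IsSolvable N
  · left
    have hcomm := comm_of_minimal_of_isSolvable N hNbot hmin
    have hNtrans : ∀ x y : Ω, ∃ m ∈ N, m • x = y := by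
      intro x y
      obtain ⟨g, rfl⟩ := MulAction.exists_smul_eq G x y
      obtain ⟨m, hm, h, hh, rfl⟩ := Subgroup.mem_sup_of_normal_left.1
        (show g ∈ N ⊔ MulAction.stabilizer G x by rw [hsup x N hN hNbot]; trivial)
      exact ⟨m, hm, by rw [mul_smul, MulAction.mem_stabilizer_iff.1 hh]⟩
    refine ⟨N, hN, ⟨fun x y => ?_⟩, ?_, hcomm, exists_orderOf_eq_of_minimal N hNbot hmin hcomm⟩
    · obtain ⟨m, hm, hmx⟩ := hNtrans x y
      exact ⟨⟨m, hm⟩, hmx⟩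
    · -- a transitive abelian group acts semiregularly
      rintro g hg ⟨x, hx⟩
      refine FaithfulSMul.eq_of_smul_eq_smul (α := Ω) fun y => ?_
      obtain ⟨m, hm, rfl⟩ := hNtrans x y
      rw [← mul_smul, hcomm g hg m hm, mul_smul, hx, one_smul]
  · right
    have hC := centralizer_eq_bot_of_minimal _ N (hsup x₀) hmin hNs
    refine ⟨N, hN, simple_of_coatom_dihedral _ N (hcoatom x₀) (hcore x₀) hn e hmin hNs hC,
      fun h => hNs (Group.isSolvable_of_comm h), hC⟩
end
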